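/- Fix an integer d ≥ 2. There exists a sequence (ε_n)_{n≥1} of nonnegative reals with ε_n → 0 as n → ∞ such that, setting t = ⌈(1+ε_n)·n·log n/2⌉ and b = ⌈(1+ε_n)·d·n/2⌉, Builder has a (t,b)-strategy for which the graph G_t is asymptotically almost surely d-connected. -/

import Mathlib

open Filter SimpleGraph
open scoped Classical

noncomputable section

/-- The number of edges of the complete graph on `Fin n`. -/
def numEdges (n : ℕ) : ℕ := Fintype.card ((completeGraph (Fin n)).edgeSet)

/-- A uniformly random ordering of the edges of `K_n` is modelled as a uniformly random
bijection from the edge set of `K_n` to `Fin (numEdges n)`; the edge proposed at the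
(0-indexed) round `r` is the preimage of `r`. -/
abbrev EdgeOrdering (n : ℕ) : Type := ((completeGraph (Fin n)).edgeSet) ≃ Fin (numEdges n)

/-- The list `(e_1, …, e_t)` of the first `t` proposed edges, in the order of proposal. -/
def history {n : ℕ} (σ : EdgeOrdering n) (t : ℕ) : List (Sym2 (Fin n)) :=
  ((List.finRange (numEdges n)).filter (fun (r : Fin (numEdges n)) => decide ((r : ℕ) < t))).map
    (fun r => ((σ.symm r : ((completeGraph (Fin n)).edgeSet)) : Sym2 (Fin n)))

/-- The probability of an event under the uniform measure on a finite type. -/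
def Pr {α : Type*} [Fintype α] (P : α → Prop) : ℝ :=
  ((Finset.univ.filter P).card : ℝ) / (Fintype.card α : ℝ)

/-- A strategy of Builder: given the history `(e_1, …, e_s)` of edges proposed so far
(the current proposal `e_s` being the last entry), decide whether to accept `e_s`. -/
abbrev Strategy (n : ℕ) : Type := List (Sym2 (Fin n)) → Bool

/-- The graph `G_t` built by Builder after the first `t` rounds: its edges are the
edges proposed at some round `r ≤ t` and accepted by the strategy at that round. -/
def builderGraph {n : ℕ} (strat : Strategy n) (σ : EdgeOrdering n) (t : ℕ) :
    SimpleGraph (Fin n) :=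
  SimpleGraph.fromEdgeSet
    {e | ∃ r : Fin (numEdges n), (r : ℕ) < t ∧
        ((σ.symm r : ((completeGraph (Fin n)).edgeSet)) : Sym2 (Fin n)) = e ∧
        strat (history σ ((r : ℕ) + 1)) = true}

/-- The number of edges accepted by Builder during the first `t` rounds. -/
def numAccepted {n : ℕ} (strat : Strategy n) (σ : EdgeOrdering n) (t : ℕ) : ℕ :=
  (Finset.univ.filter (fun e : Sym2 (Fin n) => e ∈ (builderGraph strat σ t).edgeSet)).card

/-- A graph `G` is `d`-connected if it has at least `d + 1` vertices and removing any
set of at most `d - 1` vertices leaves a connected graph. -/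
def IsKConnected {V : Type*} [Fintype V] (d : ℕ) (G : SimpleGraph V) : Prop :=
  d + 1 ≤ Fintype.card V ∧
    ∀ S : Finset V, S.card ≤ d - 1 → (G.induce ((↑S : Set V)ᶜ)).Connected


/-- edge subtype -/
abbrev EE (n : ℕ) : Type := ((completeGraph (Fin n)).edgeSet)

def hits {n : ℕ} (F : EdgeOrdering n → Finset (EE n)) (L t : ℕ) (σ : EdgeOrdering n) : ℕ :=
  (Finset.univ.filter (fun r : Fin (numEdges n) => L ≤ (r : ℕ) ∧ (r : ℕ) < t ∧ σ.symm r ∈ F σ)).card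

def InvL {n : ℕ} {β : Type*} (L : ℕ) (f : EdgeOrdering n → β) : Prop :=
  ∀ (σ : EdgeOrdering n) (i j : Fin (numEdges n)), L ≤ (i : ℕ) → L ≤ (j : ℕ) →
    f (σ.trans (Equiv.swap i j)) = f σ

lemma InvL.mono {n : ℕ} {β : Type*} {L t : ℕ} (h : L ≤ t) {f : EdgeOrdering n → β}
    (hf : InvL L f) : InvL t f := fun σ i j hi hj => hf σ i j (h.trans hi) (h.trans hj)

lemma swap_sum {n : ℕ} (t : Fin (numEdges n)) (φ : EdgeOrdering n → ℝ)
    (F : EdgeOrdering n → Finset (EE n)) (hφ : InvL (t : ℕ) φ) (hF : InvL (t : ℕ) F) :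
    ((numEdges n : ℝ) - (t : ℕ)) * ∑ σ, φ σ * (if σ.symm t ∈ F σ then 1 else 0) =
      ∑ σ, φ σ * ((Finset.univ.filter
        (fun j : Fin (numEdges n) => t ≤ j ∧ σ.symm j ∈ F σ)).card : ℝ) := by
  have key : ∀ j : Fin (numEdges n), t ≤ j →
      ∑ σ, φ σ * (if σ.symm j ∈ F σ then (1:ℝ) else 0) =
      ∑ σ, φ σ * (if σ.symm t ∈ F σ then (1:ℝ) else 0) := by
    intro j hj
    let e : EdgeOrdering n ≃ EdgeOrdering n :=
      { toFun := fun σ => σ.trans (Equiv.swap t j)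
        invFun := fun σ => σ.trans (Equiv.swap t j)
        left_inv := fun σ => by ext x; simp
        right_inv := fun σ => by ext x; simp }
    rw [← Equiv.sum_comp e]
    apply Finset.sum_congr rfl
    intro σ _
    have h1 : φ (e σ) = φ σ := hφ σ t j le_rfl hj
    have h2 : F (e σ) = F σ := hF σ t j le_rfl hj
    have h3 : (e σ).symm j = σ.symm t := by
      simp [e, Equiv.symm_trans_apply]
    rw [h1, h2, h3]
  have hc : ∀ σ : EdgeOrdering n, ((Finset.univ.filter
        (fun j : Fin (numEdges n) => t ≤ j ∧ σ.symm j ∈ F σ)).card : ℝ) =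
        ∑ j ∈ Finset.Ici t, (if σ.symm j ∈ F σ then (1:ℝ) else 0) := by
    intro σ
    rw [Finset.sum_boole]
    congr 2
    ext j; simp
  simp_rw [hc, Finset.mul_sum]
  rw [Finset.sum_comm]
  rw [Finset.sum_congr rfl (fun j hj => key j (by simpa using hj))]
  rw [Finset.sum_const, Fin.card_Ici, nsmul_eq_mul, ← Finset.mul_sum, Nat.cast_sub t.2.le]

lemma hits_inv {n : ℕ} {F : EdgeOrdering n → Finset (EE n)} {L t : ℕ} (hLt : L ≤ t)
    (hF : InvL L F) : InvL t (hits F L t) := by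
  intro σ i j hi hj
  unfold hits
  rw [hF σ i j (hLt.trans hi) (hLt.trans hj)]
  congr 1
  apply Finset.filter_congr
  intro r _
  have : r < t → (σ.trans (Equiv.swap i j)).symm r = σ.symm r := by
    intro hr
    rw [Equiv.symm_trans_apply]
    congr 1
    rw [Equiv.symm_swap, Equiv.swap_apply_of_ne_of_ne]
    · rintro rfl; omega
    · rintro rfl; omega
  constructor
  · rintro ⟨h1, h2, h3⟩; rw [this h2] at h3; exact ⟨h1, h2, h3⟩
  · rintro ⟨h1, h2, h3⟩; rw [← this h2] at h3; exact ⟨h1, h2, h3⟩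

lemma hits_succ {n : ℕ} (F : EdgeOrdering n → Finset (EE n)) (L : ℕ) (t : Fin (numEdges n))
    (hLt : L ≤ (t : ℕ)) (σ : EdgeOrdering n) :
    hits F L (t + 1) σ = hits F L t σ + if σ.symm t ∈ F σ then 1 else 0 := by
  unfold hits
  split_ifs with h
  · rw [← Finset.card_insert_of_notMem (a := t)]
    · congr 1
      ext r
      simp only [Finset.mem_filter, Finset.mem_univ, true_and, Finset.mem_insert]
      constructor
      · rintro ⟨h1, h2, h3⟩
        by_cases hrt : r = t
        · exact Or.inl hrt
        · right; refine ⟨h1, ?_, h3⟩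
          have : (r : ℕ) ≠ t := fun h => hrt (Fin.ext h)
          omega
      · rintro (rfl | ⟨h1, h2, h3⟩)
        · exact ⟨hLt, by omega, h⟩
        · exact ⟨h1, by omega, h3⟩
    · simp
  · rw [add_zero]
    congr 1
    ext r
    simp only [Finset.mem_filter, Finset.mem_univ, true_and]
    constructor
    · rintro ⟨h1, h2, h3⟩
      have : r ≠ t := by rintro rfl; exact h h3
      have : (r : ℕ) ≠ t := fun h => this (Fin.ext h)
      exact ⟨h1, by omega, h3⟩
    · rintro ⟨h1, h2, h3⟩; exact ⟨h1, by omega, h3⟩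

lemma hits_compl {n : ℕ} (F : EdgeOrdering n → Finset (EE n)) (L : ℕ) (t : Fin (numEdges n))
    (hLt : L ≤ (t : ℕ)) (σ : EdgeOrdering n) (hpos : ∀ e ∈ F σ, L ≤ (σ e : ℕ)) :
    (Finset.univ.filter (fun j : Fin (numEdges n) => t ≤ j ∧ σ.symm j ∈ F σ)).card
      + hits F L t σ = (F σ).card := by
  unfold hits
  rw [← Finset.card_union_of_disjoint]
  · apply Finset.card_bij (fun r _ => σ.symm r)
    · intro r hr; simp at hr; tauto
    · intro a _ b _ h; exact σ.symm.injective h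
    · intro e he
      refine ⟨σ e, ?_, by simp⟩
      have := hpos e he
      simp only [Finset.mem_union, Finset.mem_filter, Finset.mem_univ, true_and,
        Equiv.symm_apply_apply, he, and_true, this]
      rcases le_or_gt t (σ e) with h | h
      · exact Or.inl h
      · exact Or.inr h
  · rw [Finset.disjoint_left]
    intro r h1 h2
    simp at h1 h2
    have : (t : ℕ) ≤ r := h1.1
    omega

lemma step_lemma {n : ℕ} (L : ℕ) (t : Fin (numEdges n)) (hLt : L ≤ (t : ℕ))
    (w : EdgeOrdering n → ℝ) (F : EdgeOrdering n → Finset (EE n)) (hw : InvL L w) (hF : InvL L F)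
    (hpos : ∀ σ, w σ ≠ 0 → ∀ e ∈ F σ, L ≤ (σ e : ℕ)) (g : ℕ → ℝ) :
    ∑ σ, w σ * g (hits F L (t + 1) σ) =
      ∑ σ, w σ * (g (hits F L t σ) + (g (hits F L t σ + 1) - g (hits F L t σ)) *
        (((F σ).card : ℝ) - hits F L t σ) / ((numEdges n : ℝ) - (t : ℕ))) := by
  have hN : (0:ℝ) < (numEdges n : ℝ) - (t : ℕ) := by
    have := t.2
    have : ((t : ℕ) : ℝ) < numEdges n := by exact_mod_cast this
    linarith
  set φ : EdgeOrdering n → ℝ := fun σ => w σ * (g (hits F L t σ + 1) - g (hits F L t σ)) with hφ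
  have hφi : InvL (t : ℕ) φ := by
    intro σ i j hi hj
    simp only [hφ]
    rw [hits_inv hLt hF σ i j hi hj, hw.mono hLt σ i j hi hj]
  have h1 := swap_sum t φ F hφi (hF.mono hLt)
  have h2 : ∑ σ, w σ * g (hits F L (t + 1) σ) = ∑ σ, w σ * g (hits F L t σ) +
      ∑ σ, φ σ * (if σ.symm t ∈ F σ then 1 else 0) := by
    rw [← Finset.sum_add_distrib]
    apply Finset.sum_congr rfl
    intro σ _
    rw [hits_succ F L t hLt]
    split_ifs <;> simp [hφ] <;> ring
  have h3 : ∑ σ, φ σ * (if σ.symm t ∈ F σ then (1:ℝ) else 0) =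
      ∑ σ, φ σ * (((F σ).card : ℝ) - hits F L t σ) / ((numEdges n : ℝ) - (t : ℕ)) := by
    rw [← Finset.sum_div, eq_div_iff hN.ne', mul_comm, h1]
    apply Finset.sum_congr rfl
    intro σ _
    by_cases h0 : w σ = 0
    · simp [hφ, h0]
    · rw [← hits_compl F L t hLt σ (hpos σ h0)]
      push_cast; ring
  rw [h2, h3, ← Finset.sum_add_distrib]
  apply Finset.sum_congr rfl
  intro σ _
  simp only [hφ]; ring

/-- lower tail -/
lemma low_tail {n : ℕ} (L T d : ℕ) (hT : T ≤ numEdges n) (hLT : L ≤ T)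
    (w : EdgeOrdering n → ℝ) (F : EdgeOrdering n → Finset (EE n)) (hw : InvL L w) (hF : InvL L F)
    (hw0 : ∀ σ, 0 ≤ w σ) (hw1 : ∀ σ, w σ ≤ 1)
    (hpos : ∀ σ, w σ ≠ 0 → ∀ e ∈ F σ, L ≤ (σ e : ℕ)) (f : ℝ)
    (hf : ∀ σ, w σ ≠ 0 → f ≤ (F σ).card) (hfd : (d : ℝ) ≤ f)
    (s : ℝ) (hs0 : 0 < s) (hs1 : s < 1) :
    ∑ σ, w σ * (if hits F L T σ < d then 1 else 0) ≤
      (Fintype.card (EdgeOrdering n) : ℝ) * ((s⁻¹) ^ d *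
        Real.exp (-((1 - s) * (f - d) / (numEdges n) * ((T : ℝ) - L)))) := by
  set g : ℕ → ℝ := fun h => if h < d then s ^ h else 0 with hg
  have hg0 : ∀ h, 0 ≤ g h := fun h => by simp only [hg]; split_ifs <;> positivity
  have hgs : ∀ h, g (h + 1) ≤ s * g h := by
    intro h; simp only [hg]
    split_ifs with h1 h2 h2
    · rw [pow_succ, mul_comm]
    · omega
    · positivity
    · simp
  set θ : ℝ := (1 - s) * (f - d) / numEdges n with hθ
  have hind : ∀ k : ℕ, L + k ≤ numEdges n →
      ∑ σ, w σ * g (hits F L (L + k) σ) ≤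
        (Fintype.card (EdgeOrdering n) : ℝ) * Real.exp (-(θ * k)) := by
    intro k
    induction k with
    | zero =>
      intro _
      simp only [Nat.cast_zero, mul_zero, neg_zero, Real.exp_zero, mul_one]
      calc ∑ σ, w σ * g (hits F L (L + 0) σ) ≤ ∑ σ : EdgeOrdering n, (1:ℝ) := by
            apply Finset.sum_le_sum
            intro σ _
            have : g (hits F L (L + 0) σ) ≤ 1 := by
              simp only [hg]; split_ifs
              · exact pow_le_one₀ hs0.le hs1.le
              · exact zero_le_one
            nlinarith [hw0 σ, hw1 σ, hg0 (hits F L (L + 0) σ)]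
        _ = _ := by simp
    | succ k ih =>
      intro hk
      have ih' := ih (by omega)
      have hN : (0:ℝ) < numEdges n := by exact_mod_cast (by omega : 0 < numEdges n)
      have hst := step_lemma L ⟨L + k, by omega⟩ (by simp) w F hw hF hpos g
      simp only at hst
      rw [← add_assoc, hst]
      have hNt : (0:ℝ) < (numEdges n : ℝ) - ((L + k : ℕ) : ℝ) := by
        have : ((L + k : ℕ) : ℝ) < numEdges n := by exact_mod_cast (by omega)
        linarith
      calc _ ≤ ∑ σ, (w σ * g (hits F L (L + k) σ)) * (1 - θ) := by
            apply Finset.sum_le_sum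
            intro σ _
            by_cases h0 : w σ = 0
            · simp [h0]
            rw [mul_assoc]
            apply mul_le_mul_of_nonneg_left _ (hw0 σ)
            set h := hits F L (L + k) σ
            by_cases hd : h < d
            · have hF1 := hf σ h0
              have hh : (h : ℝ) ≤ d := by exact_mod_cast hd.le
              have e1 : (f - d) / numEdges n ≤
                  (((F σ).card : ℝ) - h) / ((numEdges n : ℝ) - ((L + k : ℕ) : ℝ)) := by
                have : (0:ℝ) ≤ ((L + k : ℕ) : ℝ) := Nat.cast_nonneg _
                apply div_le_div₀ <;> linarith
              have e0 : 0 ≤ (f - d) / numEdges n := div_nonneg (by linarith) hN.le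
              have e2 := hgs h
              have e3 : (g (h + 1) - g h) * (((F σ).card : ℝ) - h) /
                  ((numEdges n : ℝ) - ((L + k : ℕ) : ℝ)) ≤
                  (g (h + 1) - g h) * ((f - d) / numEdges n) := by
                rw [mul_div_assoc]
                apply mul_le_mul_of_nonpos_left e1
                nlinarith [hg0 h]
              have e4 : (g (h + 1) - g h) * ((f - d) / numEdges n) ≤
                  ((s - 1) * g h) * ((f - d) / numEdges n) :=
                mul_le_mul_of_nonneg_right (by linarith) e0
              have e5 : θ = (1 - s) * ((f - d) / numEdges n) := by rw [hθ]; ring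
              rw [e5]
              nlinarith
            · have a1 : g h = 0 := by simp [hg, hd]
              have a2 : g (h + 1) = 0 := by simp [hg]; omega
              simp [a1, a2]
        _ = (∑ σ, w σ * g (hits F L (L + k) σ)) * (1 - θ) := by rw [Finset.sum_mul]
        _ ≤ (∑ σ, w σ * g (hits F L (L + k) σ)) * Real.exp (-θ) := by
            apply mul_le_mul_of_nonneg_left
            · have := Real.add_one_le_exp (-θ); linarith
            · exact Finset.sum_nonneg (fun σ _ => mul_nonneg (hw0 σ) (hg0 _))
        _ ≤ ((Fintype.card (EdgeOrdering n) : ℝ) * Real.exp (-(θ * k))) * Real.exp (-θ) :=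
            mul_le_mul_of_nonneg_right ih' (Real.exp_pos _).le
        _ = _ := by
            rw [mul_assoc, ← Real.exp_add]
            congr 2; push_cast; ring
  have hfin := hind (T - L) (by omega)
  rw [Nat.add_sub_cancel' hLT, Nat.cast_sub hLT] at hfin
  calc _ ≤ ∑ σ, (s⁻¹) ^ d * (w σ * g (hits F L T σ)) := by
        apply Finset.sum_le_sum
        intro σ _
        rw [← mul_assoc, mul_comm ((s⁻¹) ^ d), mul_assoc]
        apply mul_le_mul_of_nonneg_left _ (hw0 σ)
        simp only [hg]
        split_ifs with h
        · have : s ^ d ≤ s ^ hits F L T σ := pow_le_pow_of_le_one hs0.le hs1.le h.le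
          rw [inv_pow, ← div_eq_inv_mul, le_div_iff₀ (by positivity)]
          linarith
        · simp
    _ = (s⁻¹) ^ d * ∑ σ, (w σ * g (hits F L T σ)) := by rw [Finset.mul_sum]
    _ ≤ (s⁻¹) ^ d * _ := mul_le_mul_of_nonneg_left hfin (by positivity)
    _ = _ := by ring

/-- upper tail -/
lemma up_tail {n : ℕ} (T : ℕ) (hT : 2 * T ≤ numEdges n) (F : Finset (EE n)) (M : ℕ) :
    ∑ σ : EdgeOrdering n, (if M ≤ hits (fun _ => F) 0 T σ then (1:ℝ) else 0) ≤
      (Fintype.card (EdgeOrdering n) : ℝ) * ((2⁻¹) ^ M *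
        Real.exp (2 * F.card / numEdges n * T)) := by
  set g : ℕ → ℝ := fun h => 2 ^ h with hg
  set θ : ℝ := 2 * F.card / numEdges n with hθ
  have hind : ∀ k : ℕ, k ≤ T →
      ∑ σ : EdgeOrdering n, g (hits (fun _ => F) 0 k σ) ≤
        (Fintype.card (EdgeOrdering n) : ℝ) * Real.exp (θ * k) := by
    intro k
    induction k with
    | zero =>
      intro _
      simp [hg, hits]
    | succ k ih =>
      intro hk
      have ih' := ih (by omega)
      have hN : (0:ℝ) < numEdges n := by exact_mod_cast (by omega : 0 < numEdges n)
      have hst := step_lemma 0 ⟨k, by omega⟩ (by simp) (fun _ => 1) (fun _ => F)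
        (fun _ _ _ _ _ => rfl) (fun _ _ _ _ _ => rfl) (by simp) g
      simp only [one_mul] at hst
      rw [hst]
      have hNt : (numEdges n : ℝ) / 2 ≤ (numEdges n : ℝ) - (k : ℝ) := by
        have : ((2 * k : ℕ) : ℝ) ≤ numEdges n := by exact_mod_cast (by omega)
        push_cast at this
        linarith
      calc _ ≤ ∑ σ : EdgeOrdering n, (g (hits (fun _ => F) 0 k σ)) * (1 + θ) := by
            apply Finset.sum_le_sum
            intro σ _
            set h := hits (fun _ => F) 0 k σ
            have e1 : ((F.card : ℝ) - h) / ((numEdges n : ℝ) - (k : ℝ)) ≤ θ := by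
              rw [div_le_iff₀ (by linarith), hθ]
              have : (F.card : ℝ) = 2 * F.card / numEdges n * (numEdges n / 2) := by
                field_simp
              have h2 : 2 * (F.card:ℝ) / numEdges n * (numEdges n / 2) ≤
                2 * F.card / numEdges n * ((numEdges n : ℝ) - (k : ℝ)) :=
                mul_le_mul_of_nonneg_left hNt
                  (div_nonneg (mul_nonneg zero_le_two (Nat.cast_nonneg _)) (Nat.cast_nonneg _))
              have : (0:ℝ) ≤ h := Nat.cast_nonneg _
              linarith
            have e2 : g (h + 1) - g h = g h := by
              change (2:ℝ) ^ (h + 1) - 2 ^ h = 2 ^ h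
              ring
            rw [e2, mul_div_assoc]
            have : 0 ≤ g h := by simp only [hg]; positivity
            nlinarith
        _ = (∑ σ : EdgeOrdering n, g (hits (fun _ => F) 0 k σ)) * (1 + θ) := by rw [Finset.sum_mul]
        _ ≤ (∑ σ : EdgeOrdering n, g (hits (fun _ => F) 0 k σ)) * Real.exp θ := by
            apply mul_le_mul_of_nonneg_left
            · have := Real.add_one_le_exp (θ); linarith
            · exact Finset.sum_nonneg (fun σ _ => by simp only [hg]; positivity)
        _ ≤ ((Fintype.card (EdgeOrdering n) : ℝ) * Real.exp (θ * k)) * Real.exp θ :=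
            mul_le_mul_of_nonneg_right ih' (Real.exp_pos _).le
        _ = _ := by
            rw [mul_assoc, ← Real.exp_add]
            congr 2; push_cast; ring
  have hfin := hind T le_rfl
  calc _ ≤ ∑ σ : EdgeOrdering n, (2⁻¹ : ℝ) ^ M * (g (hits (fun _ => F) 0 T σ)) := by
        apply Finset.sum_le_sum
        intro σ _
        simp only [hg]
        split_ifs with h
        · have : (2:ℝ) ^ M ≤ 2 ^ hits (fun _ => F) 0 T σ := pow_le_pow_right₀ (by norm_num) h
          rw [inv_pow, ← div_eq_inv_mul, le_div_iff₀ (by positivity)]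
          linarith
        · positivity
    _ = (2⁻¹) ^ M * ∑ σ : EdgeOrdering n, (g (hits (fun _ => F) 0 T σ)) := by rw [Finset.mul_sum]
    _ ≤ (2⁻¹) ^ M * _ := mul_le_mul_of_nonneg_left hfin (by positivity)
    _ = _ := by ring

def AvReach {α : Type*} (T : SimpleGraph α) (S : Finset α) : α → α → Prop :=
  Relation.ReflTransGen (fun a a' => T.Adj a a' ∧ a' ∉ S)

lemma run_lemma {α : Type*} (T : SimpleGraph α) (S : Finset α) (k r : ℕ) (f : ℕ → α)
    (hadj : ∀ i j, i < j → j ≤ r → j ≤ i + k → T.Adj (f i) (f j))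
    (hcount : ((Finset.Ioo 0 r).filter (fun j => f j ∈ S)).card < k) (hr : f r ∉ S) :
    AvReach T S (f 0) (f r) := by
  have key : ∀ u i : ℕ, i + u = r → AvReach T S (f i) (f r) := by
    intro u
    induction u using Nat.strong_induction_on with
    | _ u ih =>
      intro i hi
      by_cases hu : u = 0
      · have : i = r := by omega
        rw [this]; exact Relation.ReflTransGen.refl
      by_cases huk : u ≤ k
      · exact Relation.ReflTransGen.single ⟨hadj i r (by omega) le_rfl (by omega), hr⟩
      · have : ∃ j ∈ Finset.Ioc i (i + k), f j ∉ S := by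
          by_contra hcon
          push Not at hcon
          have hsub : Finset.Ioc i (i + k) ⊆ (Finset.Ioo 0 r).filter (fun j => f j ∈ S) := by
            intro j hj
            have hj' := Finset.mem_Ioc.1 hj
            rw [Finset.mem_filter, Finset.mem_Ioo]
            exact ⟨⟨by omega, by omega⟩, hcon j hj⟩
          have := Finset.card_le_card hsub
          rw [Nat.card_Ioc] at this
          omega
        obtain ⟨j, hj, hjS⟩ := this
        rw [Finset.mem_Ioc] at hj
        exact Relation.ReflTransGen.head ⟨hadj i j (by omega) (by omega) (by omega), hjS⟩
          (ih (r - j) (by omega) j (by omega))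
  exact key r 0 (by simp)

def tmpl (m q k : ℕ) : SimpleGraph (ZMod m × Fin q) :=
  SimpleGraph.fromRel (fun a b => (a.2 = b.2 ∧ ∃ j ∈ Finset.Icc 1 k, b.1 = a.1 + (j : ℕ)) ∨
    (a.1 = b.1 ∧ a.2 ≠ b.2))

lemma cast_add_ne {m j : ℕ} (h0 : 0 < j) (hj : j < m) : ((j : ℕ) : ZMod m) ≠ 0 := by
  rw [Ne, ZMod.natCast_eq_zero_iff]
  exact fun h => absurd (Nat.le_of_dvd h0 h) (by omega)

lemma tmpl_arc (m q k : ℕ) (hk : 1 ≤ k) (hkm : k < m) (S : Finset (ZMod m × Fin q)) (x y : ZMod m)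
    (z : Fin q) (hS : (S.filter (fun a => a.2 = z)).card < 2 * k) (hy : (y, z) ∉ S) :
    AvReach (tmpl m q k) S (x, z) (y, z) := by
  haveI : NeZero m := ⟨by omega⟩
  by_cases hxy : x = y
  · rw [hxy]; exact Relation.ReflTransGen.refl
  set r := (y - x).val with hr
  have hrm : r < m := ZMod.val_lt _
  have hrc : ((r : ℕ) : ZMod m) = y - x := by rw [hr]; exact ZMod.natCast_zmod_val _
  have hr0 : 0 < r := by
    rcases Nat.eq_zero_or_pos r with h | h
    · rw [h] at hrc; simp at hrc
      exact absurd (sub_eq_zero.1 hrc.symm).symm hxy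
    · exact h
  set f : ℕ → ZMod m × Fin q := fun j => (x + (j : ZMod m), z) with hf
  set g : ℕ → ZMod m × Fin q := fun j => (x - (j : ZMod m), z) with hg
  have f0 : f 0 = (x, z) := by simp [hf]
  have g0 : g 0 = (x, z) := by simp [hg]
  have fr : f r = (y, z) := by simp [hf, hrc]
  have gr : g (m - r) = (y, z) := by
    simp [hg, Nat.cast_sub hrm.le, hrc]
  have hfadj : ∀ i j, i < j → j ≤ r → j ≤ i + k → (tmpl m q k).Adj (f i) (f j) := by
    intro i j hij hjr hjk
    have e : ((j : ℕ) : ZMod m) = (i : ZMod m) + ((j - i : ℕ) : ZMod m) := by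
      rw [Nat.cast_sub hij.le]; ring
    rw [tmpl, SimpleGraph.fromRel_adj]
    refine ⟨?_, Or.inl (Or.inl ⟨rfl, j - i, ?_, ?_⟩)⟩
    · intro h
      simp only [hf, Prod.mk.injEq, and_true] at h
      rw [e] at h
      exact cast_add_ne (m := m) (j := j - i) (by omega) (by omega) (by simpa using h)
    · rw [Finset.mem_Icc]; omega
    · simp only [hf]; rw [e]; ring
  have hgadj : ∀ i j, i < j → j ≤ m - r → j ≤ i + k → (tmpl m q k).Adj (g i) (g j) := by
    intro i j hij hjr hjk
    have e : ((j : ℕ) : ZMod m) = (i : ZMod m) + ((j - i : ℕ) : ZMod m) := by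
      rw [Nat.cast_sub hij.le]; ring
    rw [tmpl, SimpleGraph.fromRel_adj]
    refine ⟨?_, Or.inr (Or.inl ⟨rfl, j - i, ?_, ?_⟩)⟩
    · intro h
      simp only [hg, Prod.mk.injEq, and_true] at h
      rw [e] at h
      exact cast_add_ne (m := m) (j := j - i) (by omega) (by omega) (by simpa using h)
    · rw [Finset.mem_Icc]; omega
    · simp only [hg]; rw [e]; ring
  by_cases h1 : ((Finset.Ioo 0 r).filter (fun j => f j ∈ S)).card < k
  · have := run_lemma (tmpl m q k) S k r f hfadj (by convert h1) (by rw [fr]; exact hy)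
    rwa [f0, fr] at this
  by_cases h2 : ((Finset.Ioo 0 (m - r)).filter (fun j => g j ∈ S)).card < k
  · have := run_lemma (tmpl m q k) S k (m - r) g hgadj (by convert h2) (by rw [gr]; exact hy)
    rwa [g0, gr] at this
  exfalso
  set A := (Finset.Ioo 0 r).filter (fun j => f j ∈ S) with hA
  set A' := (Finset.Ioo 0 (m - r)).filter (fun j => g j ∈ S) with hA'
  have inj : ∀ i j : ℕ, i < m → j < m → ((i : ℕ) : ZMod m) = j → i = j := by
    intro i j hi hj h
    have := congrArg ZMod.val h
    rwa [ZMod.val_natCast_of_lt hi, ZMod.val_natCast_of_lt hj] at this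
  have c1 : (A.image f).card = A.card := by
    apply Finset.card_image_of_injOn
    intro i hi j hj h
    simp only [hA, Finset.coe_filter, Finset.mem_Ioo, Set.mem_ofPred_eq] at hi hj
    simp only [hf, Prod.mk.injEq, and_true, add_right_inj] at h
    exact inj i j (by omega) (by omega) h
  have c2 : (A'.image g).card = A'.card := by
    apply Finset.card_image_of_injOn
    intro i hi j hj h
    simp only [hA', Finset.coe_filter, Finset.mem_Ioo, Set.mem_ofPred_eq] at hi hj
    simp only [hg, Prod.mk.injEq, and_true, sub_right_inj] at h
    exact inj i j (by omega) (by omega) h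
  have dis : Disjoint (A.image f) (A'.image g) := by
    rw [Finset.disjoint_left]
    intro a ha ha'
    rw [Finset.mem_image] at ha ha'
    obtain ⟨i, hi, rfl⟩ := ha
    obtain ⟨j, hj, h⟩ := ha'
    simp only [hA, hA', Finset.mem_filter, Finset.mem_Ioo] at hi hj
    simp only [hf, hg, Prod.mk.injEq, and_true] at h
    apply cast_add_ne (m := m) (j := i + j) (by omega) (by omega)
    push_cast
    linear_combination -h
  have sub : (A.image f) ∪ (A'.image g) ⊆ S.filter (fun a => a.2 = z) := by
    intro a ha
    rw [Finset.mem_union, Finset.mem_image, Finset.mem_image] at ha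
    rcases ha with ⟨i, hi, rfl⟩ | ⟨i, hi, rfl⟩
    · simp only [hA, Finset.mem_filter] at hi
      simp only [Finset.mem_filter]; exact ⟨hi.2, rfl⟩
    · simp only [hA', Finset.mem_filter] at hi
      simp only [Finset.mem_filter]; exact ⟨hi.2, rfl⟩
  have := Finset.card_le_card sub
  rw [Finset.card_union_of_disjoint dis, c1, c2] at this
  omega

lemma template (d : ℕ) (hd : 2 ≤ d) (M0 : ℕ) :
    ∃ (α : Type) (_ : Fintype α) (T : SimpleGraph α) (B : Finset α),
      M0 ≤ Fintype.card α ∧ 0 < Fintype.card α ∧ B.card ≤ d ∧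
      (∀ c, (Finset.univ.filter (fun c' => T.Adj c c')).card ≤ d) ∧
      ∀ S : Finset α, S.card ≤ d - 1 → ∃ b ∈ B, b ∉ S ∧ ∀ c, AvReach T S c b := by
  set k := d / 2 with hk
  set q := 1 + d % 2 with hq
  set m := M0 + d + 1 with hm
  haveI : NeZero m := ⟨by omega⟩
  haveI : NeZero q := ⟨by omega⟩
  have hdq : d = 2 * k + (q - 1) := by omega
  have hcard : Fintype.card (ZMod m × Fin q) = m * q := by
    rw [Fintype.card_prod, ZMod.card, Fintype.card_fin]
  have hmq : m ≤ m * q := Nat.le_mul_of_pos_right _ (by omega)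
  refine ⟨ZMod m × Fin q, inferInstance, tmpl m q k,
    (Finset.range d).image (fun i : ℕ => (((i : ℕ) : ZMod m), (0 : Fin q))), by omega, by omega, ?_, ?_, ?_⟩
  · exact Finset.card_image_le.trans (by simp)
  · rintro ⟨x, z⟩
    have hsub : (Finset.univ.filter (fun c' => (tmpl m q k).Adj (x, z) c')) ⊆
        ((Finset.Icc 1 k).image (fun j => (x + ((j : ℕ) : ZMod m), z)) ∪
        (Finset.Icc 1 k).image (fun j => (x - ((j : ℕ) : ZMod m), z))) ∪
        (Finset.univ.erase z).image (fun z' => (x, z')) := by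
      rintro ⟨x', z'⟩ h
      rw [Finset.mem_filter, tmpl, SimpleGraph.fromRel_adj] at h
      simp only [Finset.mem_union, Finset.mem_image, Prod.mk.injEq]
      rcases h.2.2 with (⟨h1, j, h2, h3⟩ | ⟨h1, h2⟩) | (⟨h1, j, h2, h3⟩ | ⟨h1, h2⟩)
      · exact Or.inl (Or.inl ⟨j, h2, h3.symm, h1⟩)
      · exact Or.inr ⟨z', by simpa using Ne.symm h2, h1, rfl⟩
      · exact Or.inl (Or.inr ⟨j, h2, by simp only at h3; rw [h3]; ring, h1.symm⟩)
      · exact Or.inr ⟨z', by simpa using h2, h1.symm, rfl⟩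
    refine (Finset.card_le_card hsub).trans ?_
    refine (Finset.card_union_le _ _).trans ?_
    have h1 := Finset.card_union_le ((Finset.Icc 1 k).image (fun j => (x + ((j : ℕ) : ZMod m), z)))
      ((Finset.Icc 1 k).image (fun j => (x - ((j : ℕ) : ZMod m), z)))
    have h2 := Finset.card_image_le (s := Finset.Icc 1 k) (f := (fun j => (x + ((j : ℕ) : ZMod m), z)))
    have h3 := Finset.card_image_le (s := Finset.Icc 1 k) (f := (fun j => (x - ((j : ℕ) : ZMod m), z)))
    have h4 := Finset.card_image_le (s := Finset.univ.erase z) (f := (fun z' => (x, z')))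
    rw [Nat.card_Icc] at h2 h3
    rw [Finset.card_erase_of_mem (Finset.mem_univ _), Finset.card_univ, Fintype.card_fin] at h4
    omega
  · intro S hS
    have hcol : ∃ i < d, ∀ z : Fin q, (((i : ℕ) : ZMod m), z) ∉ S := by
      by_contra hcon
      push Not at hcon
      choose! ζ hζ using hcon
      have : (Finset.range d).card ≤ S.card := by
        apply Finset.card_le_card_of_injOn (fun i => (((i : ℕ) : ZMod m), ζ i))
        · intro i hi; exact hζ i (by simpa using hi)
        · intro i hi j hj h
          simp only [Prod.mk.injEq] at h
          simp only [Finset.coe_range, Set.mem_Iio] at hi hj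
          have := congrArg ZMod.val h.1
          rwa [ZMod.val_natCast_of_lt (by omega), ZMod.val_natCast_of_lt (by omega)] at this
      rw [Finset.card_range] at this
      omega
    obtain ⟨i, hi, hcl⟩ := hcol
    refine ⟨((i : ZMod m), 0), Finset.mem_image.2 ⟨i, Finset.mem_range.2 hi, rfl⟩, hcl 0, ?_⟩
    have cross : ∀ (x : ZMod m) (z z' : Fin q), (x, z') ∉ S →
        AvReach (tmpl m q k) S (x, z) (x, z') := by
      intro x z z' h
      by_cases hz : z = z'
      · rw [hz]; exact Relation.ReflTransGen.refl
      · refine Relation.ReflTransGen.single ⟨?_, h⟩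
        rw [tmpl, SimpleGraph.fromRel_adj]
        exact ⟨by simpa using hz, Or.inl (Or.inr ⟨rfl, hz⟩)⟩
    have main : ∀ (x : ZMod m) (z : Fin q), (S.filter (fun a => a.2 = z)).card < 2 * k →
        AvReach (tmpl m q k) S (x, z) ((i : ZMod m), 0) := fun x z h =>
      (tmpl_arc m q k (by omega) (by omega) S x i z h (hcl z)).trans (cross _ _ _ (hcl 0))
    rintro ⟨x, z⟩
    by_cases hz : (S.filter (fun a => a.2 = z)).card < 2 * k
    · exact main x z hz
    · have hle := Finset.card_filter_le S (fun a => a.2 = z)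
      have hall : ∀ a ∈ S, a.2 = z := by
        refine (Finset.card_filter_eq_iff (p := fun a : ZMod m × Fin q => a.2 = z)).1 ?_
        omega
      have hq2 : 1 < Fintype.card (Fin q) := by rw [Fintype.card_fin]; omega
      obtain ⟨z', hz'⟩ := Fintype.exists_ne_of_one_lt_card hq2 z
      have hem : (S.filter (fun a => a.2 = z')).card < 2 * k := by
        rw [Finset.filter_false_of_mem]
        · simp; omega
        · intro a ha h; exact hz' (h.symm.trans (hall a ha))
      exact (cross x z z' (fun h => hz' (hall _ h))).trans (main x z' hem)

section phase1
variable {V α : Type} [Fintype V] [Fintype α]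

def monoG (col : V → α) (A : Finset (Sym2 V)) : SimpleGraph V where
  Adj u v := u ≠ v ∧ s(u, v) ∈ A ∧ col u = col v
  symm := ⟨fun u v h => ⟨h.1.symm, by rw [Sym2.eq_swap]; exact h.2.1, h.2.2.symm⟩⟩
  loopless := ⟨fun u h => h.1 rfl⟩

def rule1 (T : SimpleGraph α) (B : Finset α) (col : V → α) (A : Finset (Sym2 V)) (e : Sym2 V) :
    Prop :=
  ∃ u v, e = s(u, v) ∧ ((T.Adj (col u) (col v) ∧ (∀ w, s(u, w) ∈ A → col w ≠ col v) ∧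
      (∀ w, s(v, w) ∈ A → col w ≠ col u)) ∨
    (col u = col v ∧ col u ∈ B ∧ ¬ (monoG col A).Reachable u v))

def run1 (T : SimpleGraph α) (B : Finset α) (col : V → α) : List (Sym2 V) → Finset (Sym2 V)
  | [] => ∅
  | e :: l => if rule1 T B col (run1 T B col l) e then insert e (run1 T B col l)
      else run1 T B col l

variable (T : SimpleGraph α) (B : Finset α) (col : V → α)

lemma run1_mono (e : Sym2 V) (l : List (Sym2 V)) : run1 T B col l ⊆ run1 T B col (e :: l) := by
  rw [run1]; split_ifs
  · exact Finset.subset_insert _ _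
  · exact Finset.Subset.refl _

lemma mem_run1_cons {e x : Sym2 V} {l : List (Sym2 V)} (h : x ∈ run1 T B col (e :: l)) :
    x ∈ run1 T B col l ∨ (x = e ∧ rule1 T B col (run1 T B col l) e) := by
  rw [run1] at h; split_ifs at h with hr
  · rw [Finset.mem_insert] at h
    rcases h with h | h
    · exact Or.inr ⟨h, hr⟩
    · exact Or.inl h
  · exact Or.inl h

lemma run1_typ (l : List (Sym2 V)) : ∀ u v, s(u, v) ∈ run1 T B col l →
    T.Adj (col u) (col v) ∨ (col u = col v ∧ col u ∈ B ∧ u ≠ v) := by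
  induction l with
  | nil => intro u v h; simp [run1] at h
  | cons e l ih =>
    intro u v h
    rcases mem_run1_cons T B col h with h | ⟨rfl, u', v', he, hr⟩
    · exact ih u v h
    · have hcase : T.Adj (col u') (col v') ∨ (col u' = col v' ∧ col u' ∈ B ∧ u' ≠ v') := by
        rcases hr with hr | hr
        · exact Or.inl hr.1
        · refine Or.inr ⟨hr.1, hr.2.1, ?_⟩
          rintro rfl; exact hr.2.2 (SimpleGraph.Reachable.refl _)
      rw [Sym2.eq_iff] at he
      rcases he with ⟨rfl, rfl⟩ | ⟨rfl, rfl⟩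
      · exact hcase
      · rcases hcase with h | ⟨h1, h2, h3⟩
        · exact Or.inl h.symm
        · exact Or.inr ⟨h1.symm, h1 ▸ h2, h3.symm⟩

lemma run1_match (l : List (Sym2 V)) : ∀ u v w, s(u, v) ∈ run1 T B col l →
    s(u, w) ∈ run1 T B col l → T.Adj (col u) (col v) → col v = col w → v = w := by
  induction l with
  | nil => intro u v w h; simp [run1] at h
  | cons e l ih =>
    have key : ∀ u v w, s(u, v) ∈ run1 T B col l → s(u, w) = e →
        rule1 T B col (run1 T B col l) e → T.Adj (col u) (col v) → col v = col w → False := by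
      rintro u v w h1 rfl ⟨u', v', he, hr⟩ hT hc
      rcases hr with hr | hr
      · rw [Sym2.eq_iff] at he
        rcases he with ⟨rfl, rfl⟩ | ⟨rfl, rfl⟩
        · exact hr.2.1 v h1 hc
        · exact hr.2.2 v h1 hc
      · rw [Sym2.eq_iff] at he
        rcases he with ⟨rfl, rfl⟩ | ⟨rfl, rfl⟩
        · rw [hc, hr.1] at hT; exact T.loopless.irrefl _ hT
        · rw [hc, hr.1] at hT; exact T.loopless.irrefl _ hT
    intro u v w hv hw hT hc
    rcases mem_run1_cons T B col hv with h1 | ⟨h1, h1'⟩ <;>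
    rcases mem_run1_cons T B col hw with h2 | ⟨h2, h2'⟩
    · exact ih u v w h1 h2 hT hc
    · exact (key u v w h1 h2 h2' hT hc).elim
    · exact (key u w v h2 h1 h1' (hc ▸ hT) hc.symm).elim
    · rw [← h2, Sym2.congr_right] at h1; exact h1

lemma run1_max (l : List (Sym2 V)) : ∀ u v, s(u, v) ∈ l → T.Adj (col u) (col v) →
    (∃ w, s(u, w) ∈ run1 T B col l ∧ col w = col v) ∨
    (∃ w, s(v, w) ∈ run1 T B col l ∧ col w = col u) := by
  induction l with
  | nil => intro u v h; simp at h
  | cons e l ih =>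
    intro u v h hT
    have mono := run1_mono T B col e l
    have old : ((∃ w, s(u, w) ∈ run1 T B col l ∧ col w = col v) ∨
      (∃ w, s(v, w) ∈ run1 T B col l ∧ col w = col u)) → ((∃ w, s(u, w) ∈ run1 T B col (e :: l) ∧ col w = col v) ∨
      (∃ w, s(v, w) ∈ run1 T B col (e :: l) ∧ col w = col u)) := by
      rintro (⟨w, h1, h2⟩ | ⟨w, h1, h2⟩)
      · exact Or.inl ⟨w, mono h1, h2⟩
      · exact Or.inr ⟨w, mono h1, h2⟩
    rcases List.mem_cons.1 h with rfl | h
    · by_cases hold : ((∃ w, s(u, w) ∈ run1 T B col l ∧ col w = col v) ∨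
      (∃ w, s(v, w) ∈ run1 T B col l ∧ col w = col u))
      · exact old hold
      · push Not at hold
        left
        refine ⟨v, ?_, rfl⟩
        rw [run1, if_pos]
        · exact Finset.mem_insert_self _ _
        · exact ⟨u, v, rfl, Or.inl ⟨hT, hold.1, hold.2⟩⟩
    · exact old (ih u v h hT)

lemma monoG_le {A A' : Finset (Sym2 V)} (h : A ⊆ A') : monoG col A ≤ monoG col A' :=
  fun _ _ hu => ⟨hu.1, h hu.2.1, hu.2.2⟩

lemma run1_conn (l : List (Sym2 V)) : ∀ u v, s(u, v) ∈ l → col u = col v → col u ∈ B →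
    (monoG col (run1 T B col l)).Reachable u v := by
  induction l with
  | nil => intro u v h; simp at h
  | cons e l ih =>
    intro u v h hc hB
    have mono := monoG_le col (run1_mono T B col e l)
    rcases List.mem_cons.1 h with rfl | h
    · by_cases hold : (monoG col (run1 T B col l)).Reachable u v
      · exact hold.mono mono
      · apply SimpleGraph.Adj.reachable
        refine ⟨?_, ?_, hc⟩
        · rintro rfl; exact hold (SimpleGraph.Reachable.refl _)
        rw [run1, if_pos]
        · exact Finset.mem_insert_self _ _
        · exact ⟨u, v, rfl, Or.inr ⟨hc, hB, hold⟩⟩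
    · exact (ih u v h hc hB).mono mono

lemma run1_forest (l : List (Sym2 V)) :
    ((run1 T B col l).filter (fun e => ∃ u v, e = s(u, v) ∧ col u = col v)).card +
      ((Finset.univ.filter (fun v => col v ∈ B)).image
        (fun v => (monoG col (run1 T B col l)).connectedComponentMk v)).card ≤
      (Finset.univ.filter (fun v => col v ∈ B)).card := by
  induction l with
  | nil => simp only [run1, Finset.filter_empty, Finset.card_empty, zero_add]; exact Finset.card_image_le
  | cons e l ih =>
    set W := Finset.univ.filter (fun v => col v ∈ B) with hW
    set A := run1 T B col l with hA
    set A' := run1 T B col (e :: l) with hA'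
    have hle := monoG_le col (run1_mono T B col e l)
    set φ := SimpleGraph.ConnectedComponent.map (SimpleGraph.Hom.ofLE hle) with hφ
    have himg : W.image (fun v => (monoG col A').connectedComponentMk v) =
        (W.image (fun v => (monoG col A).connectedComponentMk v)).image φ := by
      rw [Finset.image_image]; rfl
    by_cases hr : rule1 T B col A e
    · have hAe : A' = insert e A := by rw [hA', run1, if_pos hr]
      by_cases hm : ∃ u v, e = s(u, v) ∧ col u = col v
      · obtain ⟨u, v, he, hrr⟩ := hr
        have hrr' : col u = col v ∧ col u ∈ B ∧ ¬ (monoG col A).Reachable u v := by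
          rcases hrr with h | h
          · exfalso
            obtain ⟨u', v', he', hc⟩ := hm
            rw [he, Sym2.eq_iff] at he'
            rcases he' with ⟨rfl, rfl⟩ | ⟨rfl, rfl⟩
            · exact T.loopless.irrefl _ (hc ▸ h.1)
            · exact T.loopless.irrefl _ (hc ▸ h.1)
          · exact h
        have hlt : (W.image (fun v => (monoG col A').connectedComponentMk v)).card <
            (W.image (fun v => (monoG col A).connectedComponentMk v)).card := by
          rw [himg]
          refine lt_of_le_of_ne Finset.card_image_le ?_
          intro heq
          have hinj := Finset.card_image_iff.1 heq
          have hu : u ∈ W := by simp [hW, hrr'.2.1]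
          have hv : v ∈ W := by simp [hW, ← hrr'.1, hrr'.2.1]
          have : (monoG col A).connectedComponentMk u = (monoG col A).connectedComponentMk v := by
            apply hinj
            · exact Finset.mem_coe.2 (Finset.mem_image_of_mem _ hu)
            · exact Finset.mem_coe.2 (Finset.mem_image_of_mem _ hv)
            · have hne : u ≠ v := by rintro rfl; exact hrr'.2.2 (SimpleGraph.Reachable.refl _)
              have hadj : (monoG col A').Adj u v :=
                ⟨hne, by rw [hAe, he]; exact Finset.mem_insert_self _ _, hrr'.1⟩
              exact SimpleGraph.ConnectedComponent.sound hadj.reachable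
          exact hrr'.2.2 (SimpleGraph.ConnectedComponent.exact this)
        have hcard : (A'.filter (fun e => ∃ u v, e = s(u, v) ∧ col u = col v)).card ≤
            (A.filter (fun e => ∃ u v, e = s(u, v) ∧ col u = col v)).card + 1 := by
          rw [hAe, Finset.filter_insert, if_pos hm]
          exact Finset.card_insert_le _ _
        omega
      · have hcard : A'.filter (fun e => ∃ u v, e = s(u, v) ∧ col u = col v) =
            A.filter (fun e => ∃ u v, e = s(u, v) ∧ col u = col v) := by
          rw [hAe, Finset.filter_insert, if_neg hm]
        rw [hcard, himg]
        exact (Nat.add_le_add_left Finset.card_image_le _).trans ih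
    · have hAe : A' = A := by rw [hA', run1, if_neg hr]
      rw [hAe]; exact ih

lemma run1_card (d : ℕ) (hdeg : ∀ c, (Finset.univ.filter (fun c' => T.Adj c c')).card ≤ d)
    (l : List (Sym2 V)) :
    2 * (run1 T B col l).card ≤
      d * Fintype.card V + 2 * (Finset.univ.filter (fun v => col v ∈ B)).card := by
  set A := run1 T B col l with hA
  let G : SimpleGraph V :=
    { Adj := fun u v => s(u, v) ∈ A ∧ T.Adj (col u) (col v)
      symm := ⟨fun u v h => ⟨by rw [Sym2.eq_swap]; exact h.1, h.2.symm⟩⟩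
      loopless := ⟨fun u h => T.loopless.irrefl _ h.2⟩ }
  have hdegG : ∀ v, G.degree v ≤ d := by
    intro v
    refine le_trans ?_ (hdeg (col v))
    rw [← SimpleGraph.card_neighborFinset_eq_degree]
    apply Finset.card_le_card_of_injOn col
    · intro w hw
      have : G.Adj v w := by simpa using hw
      simpa using this.2
    · intro w hw w' hw' h
      have h1 : G.Adj v w := by simpa using hw
      have h2 : G.Adj v w' := by simpa using hw'
      exact run1_match T B col l v w w' h1.1 h2.1 h1.2 h
  have hsum := G.sum_degrees_eq_twice_card_edges
  have hsum2 : ∑ v, G.degree v ≤ d * Fintype.card V := by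
    calc _ ≤ ∑ _v : V, d := Finset.sum_le_sum (fun v _ => hdegG v)
      _ = _ := by simp [mul_comm]
  have hsub : A ⊆ G.edgeFinset ∪ A.filter (fun e => ∃ u v, e = s(u, v) ∧ col u = col v) := by
    intro e he
    induction e using Sym2.ind with
    | _ u v =>
      rcases run1_typ T B col l u v he with h | h
      · apply Finset.mem_union_left
        rw [SimpleGraph.mem_edgeFinset]
        exact ⟨he, h⟩
      · apply Finset.mem_union_right
        rw [Finset.mem_filter]
        exact ⟨he, u, v, rfl, h.1⟩
  have h1 := (Finset.card_le_card hsub).trans (Finset.card_union_le _ _)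
  have h2 := run1_forest T B col l
  rw [← hA] at h2
  omega

end phase1

set_option linter.unusedSectionVars false
section linkedsec

lemma big_class {V : Type} (r : V → V → Prop) (hrefl : ∀ x, r x x) (hsymm : ∀ x y, r x y → r y x)
    (htrans : ∀ x y z, r x y → r y z → r x z) (W : Finset V) (g : ℕ) (hg : 1 ≤ g)
    (hW : 3 * g ≤ W.card)
    (hP : ∀ P Q : Finset V, P ⊆ W → Q ⊆ W → Disjoint P Q → g ≤ P.card → g ≤ Q.card →
      ∃ p ∈ P, ∃ q ∈ Q, r p q) :
    ∃ h ∈ W, (W.filter (fun v => ¬ r h v)).card < g := by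
  have key : ∀ k : ℕ, ∀ P : Finset V, P.card = k → P ⊆ W → (∀ x ∈ P, ∀ y ∈ W, r x y → y ∈ P) →
      g ≤ P.card → ∃ h ∈ W, (W.filter (fun v => ¬ r h v)).card < g := by
    intro k
    induction k using Nat.strong_induction_on with
    | _ k ih =>
      intro P hPk hPW hcl hPg
      have hcomp : (W \ P).card < g := by
        by_contra hcon
        push Not at hcon
        obtain ⟨p, hp, q, hq, hpq⟩ := hP P (W \ P) hPW Finset.sdiff_subset Finset.disjoint_sdiff hPg hcon
        rw [Finset.mem_sdiff] at hq
        exact hq.2 (hcl p hp q hq.1 hpq)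
      have hc2 := Finset.card_sdiff_add_card_eq_card hPW
      obtain ⟨h, hh⟩ : P.Nonempty := by rw [← Finset.card_pos]; omega
      set K := W.filter (fun v => r h v) with hK
      have hKc := Finset.card_filter_add_card_filter_not (s := W) (fun v => r h v)
      by_cases hKg : g ≤ K.card
      · refine ⟨h, hPW hh, ?_⟩
        by_contra hcon
        push Not at hcon
        obtain ⟨p, hp, q, hq, hpq⟩ := hP K (W.filter (fun v => ¬ r h v)) (Finset.filter_subset _ _)
          (Finset.filter_subset _ _) (Finset.disjoint_filter_filter_not _ _ _) hKg hcon
        rw [hK, Finset.mem_filter] at hp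
        rw [Finset.mem_filter] at hq
        exact hq.2 (htrans _ _ _ hp.2 hpq)
      · push Not at hKg
        have hKP : K ⊆ P := by
          intro x hx
          rw [hK, Finset.mem_filter] at hx
          exact hcl h hh x hx.1 hx.2
        have hc3 := Finset.card_sdiff_add_card_eq_card hKP
        have hhK : 0 < K.card := by
          rw [Finset.card_pos]
          exact ⟨h, by rw [hK, Finset.mem_filter]; exact ⟨hPW hh, hrefl h⟩⟩
        refine ih (P \ K).card (by omega) (P \ K) rfl (Finset.sdiff_subset.trans hPW) ?_ (by omega)
        intro x hx y hy hxy
        rw [Finset.mem_sdiff] at hx ⊢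
        refine ⟨hcl x hx.1 y hy hxy, fun hyK => hx.2 ?_⟩
        rw [hK, Finset.mem_filter] at hyK ⊢
        exact ⟨hPW hx.1, htrans _ _ _ hyK.2 (hsymm _ _ hxy)⟩
  exact key W.card W rfl (Finset.Subset.refl _) (fun _ _ y hy _ => hy) (by omega)

def AvN {α : Type*} (T : SimpleGraph α) (S : Finset α) : ℕ → α → α → Prop
  | 0, c, b => c = b
  | k + 1, c, b => ∃ c', T.Adj c c' ∧ c' ∉ S ∧ AvN T S k c' b

lemma AvReach.exists_AvN {α : Type*} {T : SimpleGraph α} {S : Finset α} {c b : α}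
    (h : AvReach T S c b) : ∃ k, AvN T S k c b := by
  unfold AvReach at h
  induction h using Relation.ReflTransGen.head_induction_on with
  | refl => exact ⟨0, rfl⟩
  | head h1 _ ih =>
    obtain ⟨k, hk⟩ := ih
    exact ⟨k + 1, _, h1.1, h1.2, hk⟩

def avG {V : Type} (A : Finset (Sym2 V)) (S : Finset V) : SimpleGraph V where
  Adj a b := a ≠ b ∧ s(a, b) ∈ A ∧ a ∉ S ∧ b ∉ S
  symm := ⟨fun a b h => ⟨h.1.symm, by rw [Sym2.eq_swap]; exact h.2.1, h.2.2.2, h.2.2.1⟩⟩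
  loopless := ⟨fun a h => h.1 rfl⟩

def Linked {V : Type} (d : ℕ) (A : Finset (Sym2 V)) (Y : Finset V) : Prop :=
  ∀ S : Finset V, S.card ≤ d - 1 → ∀ u ∈ Y, ∀ v ∈ Y, u ∉ S → v ∉ S → (avG A S).Reachable u v

variable {V α : Type} [Fintype V] [Fintype α]
variable (T : SimpleGraph α) (B : Finset α) (col : V → α)

def NbM (A : Finset (Sym2 V)) (v : V) : Finset V :=
  Finset.univ.filter (fun w => s(v, w) ∈ A ∧ T.Adj (col v) (col w))

def badS (A : Finset (Sym2 V)) (D : Finset V) : ℕ → Finset V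
  | 0 => D
  | k + 1 => badS A D k ∪ (badS A D k).biUnion (NbM T col A)

lemma badS_mono (A : Finset (Sym2 V)) (D : Finset V) (i : ℕ) : D ⊆ badS T col A D i := by
  induction i with
  | zero => exact Finset.Subset.refl _
  | succ i ih => exact ih.trans Finset.subset_union_left

lemma badS_card (l : List (Sym2 V)) (D : Finset V) (i : ℕ) :
    (badS T col (run1 T B col l) D i).card ≤ (1 + Fintype.card α) ^ i * D.card := by
  induction i with
  | zero => simp [badS]
  | succ i ih =>
    have hN : ∀ v, (NbM T col (run1 T B col l) v).card ≤ Fintype.card α := by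
      intro v
      rw [← Finset.card_univ]
      apply Finset.card_le_card_of_injOn col
      · intro w _; simp
      · intro w hw w' hw' h
        have h1 : s(v, w) ∈ run1 T B col l ∧ T.Adj (col v) (col w) := by simpa [NbM] using hw
        have h2 : s(v, w') ∈ run1 T B col l ∧ T.Adj (col v) (col w') := by simpa [NbM] using hw'
        exact run1_match T B col l v w w' h1.1 h2.1 h1.2 h
    have h1 := Finset.card_biUnion_le_card_mul (badS T col (run1 T B col l) D i)
      (NbM T col (run1 T B col l)) (Fintype.card α) (fun v _ => hN v)
    rw [badS]
    refine (Finset.card_union_le _ _).trans ?_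
    calc _ ≤ (badS T col (run1 T B col l) D i).card * (1 + Fintype.card α) := by
            rw [mul_add, mul_one]; omega
      _ ≤ ((1 + Fintype.card α) ^ i * D.card) * (1 + Fintype.card α) := Nat.mul_le_mul_right _ ih
      _ = _ := by ring

lemma lift_walk (A : Finset (Sym2 V)) (D : Finset V) (S : Finset V)
    (hD : ∀ v, v ∉ D → ∀ c', T.Adj (col v) c' → ∃ w, s(v, w) ∈ A ∧ col w = c') (b : α) (k : ℕ) :
    ∀ i v, k ≤ i → v ∉ badS T col A D i → v ∉ S → AvN T (S.image col) k (col v) b →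
      ∃ h, h ∉ D ∧ col h = b ∧ (avG A S).Reachable v h := by
  induction k with
  | zero =>
    intro i v _ hv _ h
    exact ⟨v, fun h' => hv (badS_mono T col A D i h'), h, SimpleGraph.Reachable.refl _⟩
  | succ k ih =>
    rintro i v hi hv hvS ⟨c', hT, hc', hk⟩
    obtain ⟨i, rfl⟩ : ∃ j, i = j + 1 := ⟨i - 1, by omega⟩
    obtain ⟨w, hw, rfl⟩ := hD v (fun h' => hv (badS_mono T col A D _ h')) c' hT
    have hwS : w ∉ S := fun h => hc' (Finset.mem_image_of_mem _ h)
    have hwB : w ∉ badS T col A D i := by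
      intro h
      apply hv
      rw [badS]
      apply Finset.mem_union_right
      rw [Finset.mem_biUnion]
      refine ⟨w, h, ?_⟩
      rw [NbM, Finset.mem_filter]
      exact ⟨Finset.mem_univ _, by rw [Sym2.eq_swap]; exact hw, hT.symm⟩
    obtain ⟨h, h1, h2, h3⟩ := ih i w (by omega) hwB hwS hk
    refine ⟨h, h1, h2, SimpleGraph.Reachable.trans (SimpleGraph.Adj.reachable ?_) h3⟩
    refine ⟨?_, hw, hvS, hwS⟩
    rintro rfl
    exact T.loopless.irrefl _ hT

lemma mono_reach (A : Finset (Sym2 V)) (S : Finset V) (u v : V) (hu : col u ∉ S.image col)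
    (h : (monoG col A).Reachable u v) : (avG A S).Reachable u v := by
  rw [SimpleGraph.reachable_iff_reflTransGen] at h
  have : (avG A S).Reachable u v ∧ col v = col u := by
    induction h with
    | refl => exact ⟨SimpleGraph.Reachable.refl _, rfl⟩
    | @tail x y _ hxy ih =>
      have hy : col y = col u := hxy.2.2.symm.trans ih.2
      refine ⟨ih.1.trans (SimpleGraph.Adj.reachable ⟨hxy.1, hxy.2.1, ?_, ?_⟩), hy⟩
      · intro h; exact hu (ih.2 ▸ Finset.mem_image_of_mem col h)
      · intro h; exact hu (hy ▸ Finset.mem_image_of_mem col h)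
  exact this.1

lemma unmatched_card (l : List (Sym2 V)) (g : ℕ)
    (hP : ∀ P Q : Finset V, Disjoint P Q → g ≤ P.card → g ≤ Q.card → ∃ p ∈ P, ∃ q ∈ Q, s(p, q) ∈ l)
    (hbal : ∀ c c', (Finset.univ.filter (fun v => col v = c)).card ≤
      (Finset.univ.filter (fun v => col v = c')).card + 1)
    (c c' : α) (hcc : T.Adj c c') :
    (Finset.univ.filter (fun v => col v = c ∧ ∀ w, s(v, w) ∈ run1 T B col l → col w ≠ c')).card ≤ g := by
  set A := run1 T B col l with hA
  set U := fun c c' => Finset.univ.filter (fun v => col v = c ∧ ∀ w, s(v, w) ∈ A → col w ≠ c') with hU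
  set C := fun c => Finset.univ.filter (fun v => col v = c) with hC
  have hsub : ∀ c c', U c c' ⊆ C c := by
    intro c c' v hv
    simp only [hU, hC, Finset.mem_filter] at hv ⊢
    exact ⟨hv.1, hv.2.1⟩
  have hinj : ∀ c c', T.Adj c c' → (C c \ U c c').card ≤ (C c' \ U c' c).card := by
    intro c c' h
    have hex : ∀ v, v ∈ C c \ U c c' → ∃ w, s(v, w) ∈ A ∧ col w = c' := by
      intro v hv
      rw [Finset.mem_sdiff] at hv
      by_contra hcon
      push Not at hcon
      apply hv.2
      have := hv.1
      simp only [hU, hC, Finset.mem_filter] at this ⊢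
      exact ⟨this.1, this.2, hcon⟩
    choose! f hf using hex
    have hcolC : ∀ v, v ∈ C c \ U c c' → col v = c := by
      intro v hv
      rw [Finset.mem_sdiff] at hv
      have := hv.1
      simp only [hC, Finset.mem_filter] at this
      exact this.2
    apply Finset.card_le_card_of_injOn f
    · intro v hv
      have hv' := Finset.mem_coe.1 hv
      obtain ⟨h1, h2⟩ := hf v hv'
      rw [Finset.mem_coe, Finset.mem_sdiff]
      simp only [hU, hC, Finset.mem_filter, Finset.mem_univ, true_and]
      refine ⟨h2, fun h3 => h3.2 v (by rw [Sym2.eq_swap]; exact h1) (hcolC v hv')⟩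
    · intro v hv v' hv' heq
      have hv := Finset.mem_coe.1 hv
      have hv' := Finset.mem_coe.1 hv'
      obtain ⟨h1, h2⟩ := hf v hv
      obtain ⟨h1', h2'⟩ := hf v' hv'
      rw [← heq] at h1'
      refine run1_match T B col l (f v) v v' (by rw [Sym2.eq_swap]; exact h1)
        (by rw [Sym2.eq_swap]; exact h1') ?_ ?_
      · rw [h2, hcolC v hv]; exact h.symm
      · rw [hcolC v hv, hcolC v' hv']
  have h1 := Finset.card_sdiff_add_card_eq_card (hsub c c')
  have h2 := Finset.card_sdiff_add_card_eq_card (hsub c' c)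
  have h3 := hinj c c' hcc
  have h4 := hinj c' c hcc.symm
  have h5 := hbal c c'
  change (U c c').card ≤ g
  change (C c).card ≤ (C c').card + 1 at h5
  by_contra hcon
  push Not at hcon
  have hdisj : Disjoint (U c c') (U c' c) := by
    rw [Finset.disjoint_left]
    intro v hv hv'
    have e1 := hsub _ _ hv
    have e2 := hsub _ _ hv'
    simp only [hC, Finset.mem_filter, Finset.mem_univ, true_and] at e1 e2
    rw [← e1, ← e2] at hcc
    exact T.loopless.irrefl _ hcc
  obtain ⟨p, hp, q, hq, hpq⟩ := hP _ _ hdisj (by omega) (by omega : g ≤ (U c' c).card)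
  simp only [hU, Finset.mem_filter, Finset.mem_univ, true_and] at hp hq
  rcases run1_max T B col l p q hpq (by rw [hp.1, hq.1]; exact hcc) with ⟨w, hw, hw'⟩ | ⟨w, hw, hw'⟩
  · exact hp.2 w hw (hw'.trans hq.1)
  · exact hq.2 w hw (hw'.trans hp.1)

lemma linked_exists (d R : ℕ)
    (hT : ∀ S : Finset α, S.card ≤ d - 1 → ∃ b ∈ B, b ∉ S ∧ ∀ c, ∃ k ≤ R, AvN T S k c b)
    (l : List (Sym2 V)) (g : ℕ) (hg : 1 ≤ g)
    (hP : ∀ P Q : Finset V, Disjoint P Q → g ≤ P.card → g ≤ Q.card → ∃ p ∈ P, ∃ q ∈ Q, s(p, q) ∈ l)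
    (hbal : ∀ c c', (Finset.univ.filter (fun v => col v = c)).card ≤
      (Finset.univ.filter (fun v => col v = c')).card + 1)
    (hbig : ∀ c, 3 * g ≤ (Finset.univ.filter (fun v => col v = c)).card) :
    ∃ Y : Finset V, Linked d (run1 T B col l) Y ∧
      Fintype.card V ≤ Y.card + (1 + Fintype.card α) ^ R * (Fintype.card α * Fintype.card α * g + Fintype.card α * g) := by
  set A := run1 T B col l with hA
  have hK : ∀ b, b ∈ B → ∃ h ∈ Finset.univ.filter (fun v => col v = b),
      ((Finset.univ.filter (fun v => col v = b)).filter (fun v => ¬ (monoG col A).Reachable h v)).card < g := by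
    intro b hb
    have hbc := big_class (fun u v => (monoG col A).Reachable u v) (fun x => SimpleGraph.Reachable.refl x)
      (fun x y h => h.symm) (fun x y z h1 h2 => h1.trans h2) _ g hg (hbig b) ?_
    · obtain ⟨h, hh, hc⟩ := hbc
      exact ⟨h, hh, by convert hc⟩
    intro P Q hPW hQW hd hp hq
    obtain ⟨p, hp, q, hq, hpq⟩ := hP P Q hd hp hq
    have e1 := hPW hp
    have e2 := hQW hq
    simp only [Finset.mem_filter, Finset.mem_univ, true_and] at e1 e2
    exact ⟨p, hp, q, hq, run1_conn T B col l p q hpq (e1.trans e2.symm) (e1 ▸ hb)⟩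
  have hne : Nonempty V := by
    obtain ⟨b, hbB, _⟩ := hT ∅ (by simp)
    obtain ⟨h, _⟩ := hK b hbB
    exact ⟨h⟩
  choose! h0 hh0 hh1 using hK
  set D1 := (Finset.univ.filter (fun p : α × α => T.Adj p.1 p.2)).biUnion (fun p =>
    Finset.univ.filter (fun v => col v = p.1 ∧ ∀ w, s(v, w) ∈ A → col w ≠ p.2)) with hD1
  set D2 := B.biUnion (fun b => (Finset.univ.filter (fun v => col v = b)).filter
    (fun v => ¬ (monoG col A).Reachable (h0 b) v)) with hD2
  have c1 : D1.card ≤ Fintype.card α * Fintype.card α * g := by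
    refine (Finset.card_biUnion_le_card_mul _ _ g ?_).trans ?_
    · intro p hp
      exact unmatched_card T B col l g hP hbal p.1 p.2 (by simpa using hp)
    · apply Nat.mul_le_mul_right
      refine (Finset.card_filter_le _ _).trans ?_
      rw [Finset.card_univ, Fintype.card_prod]
  have c2 : D2.card ≤ Fintype.card α * g := by
    refine (Finset.card_biUnion_le_card_mul _ _ g ?_).trans ?_
    · intro b hb
      exact (hh1 b hb).le
    · exact Nat.mul_le_mul_right _ (Finset.card_le_univ _)
  set D := D1 ∪ D2 with hD
  have cD : D.card ≤ Fintype.card α * Fintype.card α * g + Fintype.card α * g :=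
    (Finset.card_union_le _ _).trans (Nat.add_le_add c1 c2)
  refine ⟨(badS T col A D R)ᶜ, ?_, ?_⟩
  · intro S hS u hu v hv huS hvS
    obtain ⟨b, hbB, hbS, hb⟩ := hT (S.image col) (Finset.card_image_le.trans hS)
    have hDm : ∀ v, v ∉ D → ∀ c', T.Adj (col v) c' → ∃ w, s(v, w) ∈ A ∧ col w = c' := by
      intro v hv c' hc'
      by_contra hcon
      push Not at hcon
      apply hv
      apply Finset.mem_union_left
      rw [hD1, Finset.mem_biUnion]
      refine ⟨(col v, c'), by simpa using hc', ?_⟩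
      rw [Finset.mem_filter]
      exact ⟨Finset.mem_univ _, rfl, hcon⟩
    have key : ∀ u, u ∈ (badS T col A D R)ᶜ → u ∉ S → (avG A S).Reachable u (h0 b) := by
      intro u hu huS
      rw [Finset.mem_compl] at hu
      obtain ⟨k, hkR, hk⟩ := hb (col u)
      obtain ⟨h, hh, hcol, hr⟩ := lift_walk T col A D S hDm b k R u hkR hu huS hk
      refine hr.trans (SimpleGraph.Reachable.symm ?_)
      have e0 := hh0 b hbB
      simp only [Finset.mem_filter, Finset.mem_univ, true_and] at e0
      apply mono_reach col A S (h0 b) h (by rw [e0]; exact hbS)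
      by_contra hcon
      apply hh
      apply Finset.mem_union_right
      rw [hD2, Finset.mem_biUnion]
      refine ⟨b, hbB, ?_⟩
      simp only [Finset.mem_filter, Finset.mem_univ, true_and]
      exact ⟨hcol, hcon⟩
    exact (key u hu huS).trans (key v hv hvS).symm
  · have hcc := Finset.card_compl_add_card (badS T col A D R)
    rw [← hcc]
    apply Nat.add_le_add_left
    exact (badS_card T B col l D R).trans (Nat.mul_le_mul_left _ cD)

end linkedsec

set_option linter.unusedSectionVars false
section strat

lemma filter_lt_range (N t : ℕ) : (List.range N).filter (fun r => decide (r < t)) = (List.range N).take t := by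
  induction N with
  | zero => simp
  | succ N ih =>
    rw [List.range_succ, List.filter_append, ih]
    by_cases h : N < t
    · rw [List.take_of_length_le (by simp; omega), List.take_of_length_le (by simp; omega)]
      simp [h]
    · rw [List.take_append_of_le_length (by simp; omega)]
      simp [h]

lemma history_eq {n : ℕ} (σ : EdgeOrdering n) (t : ℕ) :
    history σ t = ((List.finRange (numEdges n)).map (fun r => ((σ.symm r : EE n) : Sym2 (Fin n)))).take t := by
  rw [history, ← List.map_take]
  congr 1
  apply List.map_injective_iff.2 Fin.val_injective
  rw [List.map_take, List.map_coe_finRange_eq_range, ← filter_lt_range, ← List.map_coe_finRange_eq_range, List.filter_map]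
  rfl

lemma history_len {n : ℕ} (σ : EdgeOrdering n) (t : ℕ) (ht : t ≤ numEdges n) : (history σ t).length = t := by
  rw [history_eq]; simp [ht]

lemma history_succ {n : ℕ} (σ : EdgeOrdering n) (r : Fin (numEdges n)) :
    history σ (r + 1) = history σ r ++ [((σ.symm r : EE n) : Sym2 (Fin n))] := by
  rw [history_eq, history_eq, List.take_add_one]
  congr 1
  simp

lemma history_take {n : ℕ} (σ : EdgeOrdering n) (L t : ℕ) (h : L ≤ t) :
    (history σ t).take L = history σ L := by
  rw [history_eq, history_eq, List.take_take, min_eq_left h]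

lemma history_drop_mem {n : ℕ} (σ : EdgeOrdering n) (L t : ℕ) (r : Fin (numEdges n)) (h : L ≤ (r : ℕ))
    (h2 : (r : ℕ) < t) : ((σ.symm r : EE n) : Sym2 (Fin n)) ∈ (history σ t).drop L := by
  rw [history_eq, List.mem_iff_getElem]
  refine ⟨r - L, by simp; omega, ?_⟩
  simp [h]

lemma mem_history {n : ℕ} (σ : EdgeOrdering n) (t : ℕ) (e : EE n) (h : ((σ e : Fin (numEdges n)) : ℕ) < t) :
    (e : Sym2 (Fin n)) ∈ history σ t := by
  have := history_drop_mem σ 0 t (σ e) (Nat.zero_le _) h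
  simpa using this

lemma of_mem_history {n : ℕ} (σ : EdgeOrdering n) (t : ℕ) (e : EE n)
    (h : (e : Sym2 (Fin n)) ∈ history σ t) : ((σ e : Fin (numEdges n)) : ℕ) < t := by
  rw [history, List.mem_map] at h
  obtain ⟨r, hr, he⟩ := h
  have he' : σ.symm r = e := Subtype.ext he
  rw [← he']
  simpa using hr

lemma history_inv {n : ℕ} (L : ℕ) : InvL L (fun σ : EdgeOrdering n => history σ L) := by
  intro σ i j hi hj
  simp only [history]
  apply List.map_congr_left
  intro r hr
  have hr' : (r : ℕ) < L := by simpa using hr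
  congr 1
  rw [Equiv.symm_trans_apply, Equiv.symm_swap, Equiv.swap_apply_of_ne_of_ne]
  · rintro rfl; omega
  · rintro rfl; omega

variable {V α : Type} [Fintype V] [Fintype α]

def rule2 (d : ℕ) (Y : Finset V) (A : Finset (Sym2 V)) (e : Sym2 V) : Prop :=
  ∃ x y, e = s(x, y) ∧ x ∉ Y ∧ y ∈ Y ∧ (A.filter (fun e' => x ∈ e')).card < d

def run2 (d : ℕ) (Y : Finset V) : List (Sym2 V) → Finset (Sym2 V)
  | [] => ∅
  | e :: l => if rule2 d Y (run2 d Y l) e then insert e (run2 d Y l) else run2 d Y l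

lemma run2_mono (d : ℕ) (Y : Finset V) (e : Sym2 V) (l : List (Sym2 V)) :
    run2 d Y l ⊆ run2 d Y (e :: l) := by
  rw [run2]; split_ifs
  · exact Finset.subset_insert _ _
  · exact Finset.Subset.refl _

lemma mem_run2_cons (d : ℕ) (Y : Finset V) {e x : Sym2 V} {l : List (Sym2 V)}
    (h : x ∈ run2 d Y (e :: l)) :
    x ∈ run2 d Y l ∨ (x = e ∧ rule2 d Y (run2 d Y l) e) := by
  rw [run2] at h; split_ifs at h with hr
  · rw [Finset.mem_insert] at h
    rcases h with h | h
    · exact Or.inr ⟨h, hr⟩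
    · exact Or.inl h
  · exact Or.inl h

lemma run2_typ (d : ℕ) (Y : Finset V) (l : List (Sym2 V)) : ∀ e ∈ run2 d Y l,
    ∃ x y, e = s(x, y) ∧ x ∉ Y ∧ y ∈ Y := by
  induction l with
  | nil => intro e h; simp [run2] at h
  | cons e l ih =>
    intro e' h
    rcases mem_run2_cons d Y h with h | ⟨rfl, x, y, h1, h2, h3, _⟩
    · exact ih e' h
    · exact ⟨x, y, h1, h2, h3⟩

lemma run2_deg (d : ℕ) (Y : Finset V) (l : List (Sym2 V)) (x : V) (hx : x ∉ Y) :
    ((run2 d Y l).filter (fun e => x ∈ e)).card ≤ d := by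
  induction l with
  | nil => simp [run2]
  | cons e l ih =>
    rw [run2]
    split_ifs with hr
    · rw [Finset.filter_insert]
      split_ifs with hxe
      · obtain ⟨x', y', rfl, h1, h2, h3⟩ := hr
        rw [Sym2.mem_iff] at hxe
        rcases hxe with rfl | rfl
        · exact (Finset.card_insert_le _ _).trans h3
        · exact (hx h2).elim
      · exact ih
    · exact ih

lemma run2_card (d : ℕ) (Y : Finset V) (l : List (Sym2 V)) :
    (run2 d Y l).card ≤ d * (Yᶜ).card := by
  have hsub : run2 d Y l ⊆ (Yᶜ).biUnion (fun x => (run2 d Y l).filter (fun e => x ∈ e)) := by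
    intro e he
    obtain ⟨x, y, rfl, hx, hy⟩ := run2_typ d Y l e he
    rw [Finset.mem_biUnion]
    exact ⟨x, by simpa using hx, by rw [Finset.mem_filter]; exact ⟨he, Sym2.mem_mk_left _ _⟩⟩
  refine (Finset.card_le_card hsub).trans ?_
  rw [mul_comm]
  apply Finset.card_biUnion_le_card_mul
  intro x hx
  exact run2_deg d Y l x (by simpa using hx)

lemma run2_full (d : ℕ) (Y : Finset V) (l : List (Sym2 V)) (x : V) (hx : x ∉ Y) :
    d ≤ ((run2 d Y l).filter (fun e => x ∈ e)).card ∨ ∀ y ∈ Y, s(x, y) ∈ l → s(x, y) ∈ run2 d Y l := by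
  induction l with
  | nil => right; simp
  | cons e l ih =>
    have hm := run2_mono d Y e l
    by_cases hd : d ≤ ((run2 d Y l).filter (fun e => x ∈ e)).card
    · left
      exact hd.trans (Finset.card_le_card (Finset.filter_subset_filter _ hm))
    · right
      have ih' := ih.resolve_left hd
      intro y hy hl
      rcases List.mem_cons.1 hl with rfl | hl
      · rw [run2, if_pos]
        · exact Finset.mem_insert_self _ _
        · exact ⟨x, y, rfl, hx, hy, by omega⟩
      · exact hm (ih' y hy hl)

def chooseY (d m : ℕ) (A : Finset (Sym2 V)) : Finset V :=
  if h : ∃ Y, Linked d A Y ∧ Fintype.card V ≤ Y.card + m then h.choose else Finset.univ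

lemma chooseY_card (d m : ℕ) (A : Finset (Sym2 V)) : Fintype.card V ≤ (chooseY d m A).card + m := by
  unfold chooseY
  split_ifs with h
  · exact h.choose_spec.2
  · rw [Finset.card_univ]; omega

lemma chooseY_linked (d m : ℕ) (A : Finset (Sym2 V)) (h : ∃ Y, Linked d A Y ∧ Fintype.card V ≤ Y.card + m) :
    Linked d A (chooseY d m A) := by
  unfold chooseY
  rw [dif_pos h]
  exact h.choose_spec.1

variable (T : SimpleGraph α) (B : Finset α) (col : V → α)

def tot (d m L : ℕ) (h : List (Sym2 V)) : Finset (Sym2 V) :=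
  run1 T B col (h.take L).reverse ∪
    run2 d (chooseY d m (run1 T B col (h.take L).reverse)) (h.drop L).reverse

lemma mem_tot (d m L : ℕ) (h : List (Sym2 V)) (e : Sym2 V) :
    e ∈ tot T B col d m L h ↔ e ∈ run1 T B col (h.take L).reverse ∨
      e ∈ run2 d (chooseY d m (run1 T B col (h.take L).reverse)) (h.drop L).reverse :=
  Finset.mem_union

lemma tot_step (d m L : ℕ) (h : List (Sym2 V)) (e : Sym2 V) :
    tot T B col d m L h ⊆ tot T B col d m L (h ++ [e]) ∧
    ∀ x ∈ tot T B col d m L (h ++ [e]), x = e ∨ x ∈ tot T B col d m L h := by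
  simp only [← Finset.mem_insert]
  change _ ∧ tot T B col d m L (h ++ [e]) ⊆ insert e (tot T B col d m L h)
  unfold tot
  by_cases hL : h.length < L
  · have hlen : (h ++ [e]).length ≤ L := by rw [List.length_append, List.length_singleton]; omega
    rw [List.take_of_length_le hlen, List.take_of_length_le hL.le,
      List.drop_of_length_le hlen, List.drop_of_length_le hL.le, List.reverse_append]
    have h0 : ∀ Y : Finset V, run2 d Y [] = ∅ := fun Y => rfl
    simp only [List.reverse_nil, h0, Finset.union_empty, List.reverse_cons, List.nil_append, List.singleton_append]
    refine ⟨run1_mono T B col e _, fun x hx => ?_⟩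
    rcases mem_run1_cons T B col hx with h | ⟨rfl, _⟩
    · exact Finset.mem_insert_of_mem h
    · exact Finset.mem_insert_self _ _
  · rw [List.take_append_of_le_length (by omega), List.drop_append_of_le_length (by omega), List.reverse_append]
    simp only [List.reverse_cons, List.reverse_nil, List.nil_append, List.singleton_append]
    refine ⟨Finset.union_subset_union_right (run2_mono d _ e _), fun x hx => ?_⟩
    rw [Finset.mem_union] at hx
    rcases hx with hx | hx
    · exact Finset.mem_insert_of_mem (Finset.mem_union_left _ hx)
    rcases mem_run2_cons d _ hx with h | ⟨rfl, _⟩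
    · exact Finset.mem_insert_of_mem (Finset.mem_union_right _ h)
    · exact Finset.mem_insert_self _ _

lemma tot_card (d m L K : ℕ) (hdeg : ∀ c, (Finset.univ.filter (fun c' => T.Adj c c')).card ≤ d)
    (hK : (Finset.univ.filter (fun v => col v ∈ B)).card ≤ K) (h : List (Sym2 V)) :
    2 * (tot T B col d m L h).card ≤ d * Fintype.card V + 2 * K + 2 * (d * m) := by
  unfold tot
  have h1 := run1_card T B col d hdeg (h.take L).reverse
  have h2 := run2_card d (chooseY d m (run1 T B col (h.take L).reverse)) (h.drop L).reverse
  have h3 := chooseY_card d m (run1 T B col (h.take L).reverse)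
  have h3' : ((chooseY d m (run1 T B col (h.take L).reverse))ᶜ).card ≤ m := by
    rw [Finset.card_compl]; omega
  have h4 := Nat.mul_le_mul_left d h3'
  have h5 := Finset.card_union_le (run1 T B col (h.take L).reverse)
    (run2 d (chooseY d m (run1 T B col (h.take L).reverse)) (h.drop L).reverse)
  omega

end strat

section strat2
variable {n : ℕ} {α : Type} [Fintype α] (T : SimpleGraph α) (B : Finset α) (col : Fin n → α)

def theStrat (d m L : ℕ) : Strategy n := fun h =>
  decide (∃ e, h.getLast? = some e ∧ e ∈ tot T B col d m L h)

lemma theStrat_succ (d m L : ℕ) (σ : EdgeOrdering n) (r : Fin (numEdges n)) :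
    theStrat T B col d m L (history σ (r + 1)) = true ↔
      ((σ.symm r : EE n) : Sym2 (Fin n)) ∈ tot T B col d m L (history σ (r + 1)) := by
  rw [theStrat, decide_eq_true_iff]
  have : (history σ (r + 1)).getLast? = some ((σ.symm r : EE n) : Sym2 (Fin n)) := by
    rw [history_succ]; simp
  rw [this]
  simp

lemma tot_history_mono (d m L : ℕ) (σ : EdgeOrdering n) (s t : ℕ) (hst : s ≤ t) (ht : t ≤ numEdges n) :
    tot T B col d m L (history σ s) ⊆ tot T B col d m L (history σ t) := by
  induction t, hst using Nat.le_induction with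
  | base => exact Finset.Subset.refl _
  | succ t hst ih =>
    refine (ih (by omega)).trans ?_
    rw [history_succ σ ⟨t, by omega⟩]
    exact (tot_step T B col d m L _ _).1

lemma tot_history_accepted (d m L : ℕ) (σ : EdgeOrdering n) (t : ℕ) (ht : t ≤ numEdges n) :
    ∀ e ∈ tot T B col d m L (history σ t), ∃ r : Fin (numEdges n), (r : ℕ) < t ∧
      ((σ.symm r : EE n) : Sym2 (Fin n)) = e ∧ theStrat T B col d m L (history σ (r + 1)) = true := by
  induction t with
  | zero =>
    intro e he
    have : history σ 0 = [] := by rw [history_eq]; simp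
    rw [this] at he
    simp [tot, run1, run2] at he
  | succ t ih =>
    intro e he
    have hs := history_succ σ ⟨t, by omega⟩
    have he0 := he
    simp only at hs
    rw [hs] at he
    have := (tot_step T B col d m L _ _).2 _ he
    rcases this with h | h
    · refine ⟨⟨t, by omega⟩, by simp, h.symm, ?_⟩
      rw [theStrat_succ, ← h]
      exact he0
    · obtain ⟨r, h1, h2, h3⟩ := ih (by omega) e h
      exact ⟨r, by omega, h2, h3⟩

lemma builder_adj (d m L : ℕ) (σ : EdgeOrdering n) (t : ℕ) (ht : t ≤ numEdges n) (u v : Fin n)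
    (hne : u ≠ v) (h : s(u, v) ∈ tot T B col d m L (history σ t)) :
    (builderGraph (theStrat T B col d m L) σ t).Adj u v := by
  rw [builderGraph, SimpleGraph.fromEdgeSet_adj]
  exact ⟨tot_history_accepted T B col d m L σ t ht _ h, hne⟩

lemma builder_num (d m L : ℕ) (σ : EdgeOrdering n) (t : ℕ) :
    ∃ h, numAccepted (theStrat T B col d m L) σ t ≤ (tot T B col d m L h).card := by
  refine ⟨history σ (min t (numEdges n)), ?_⟩
  rw [numAccepted]
  apply Finset.card_le_card
  intro e he
  rw [Finset.mem_filter, builderGraph, SimpleGraph.edgeSet_fromEdgeSet] at he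
  obtain ⟨r, h1, h2, h3⟩ := he.2.1
  rw [theStrat_succ, h2] at h3
  exact tot_history_mono T B col d m L σ _ _ (by have := r.2; omega) (by omega) h3

lemma avG_induce {V : Type} (A : Finset (Sym2 V)) (S : Finset V) (G : SimpleGraph V)
    (hG : ∀ u v, u ≠ v → s(u, v) ∈ A → G.Adj u v) (u v : V) (h : (avG A S).Reachable u v)
    (hu : u ∉ S) : ∃ hv : v ∉ S, (G.induce ((↑S : Set V)ᶜ)).Reachable ⟨u, by simpa using hu⟩ ⟨v, by simpa using hv⟩ := by
  rw [SimpleGraph.reachable_iff_reflTransGen] at h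
  induction h with
  | refl => exact ⟨hu, SimpleGraph.Reachable.refl _⟩
  | @tail x y _ hxy ih =>
    obtain ⟨hx, hr⟩ := ih
    refine ⟨hxy.2.2.2, hr.trans (SimpleGraph.Adj.reachable ?_)⟩
    exact hG x y hxy.1 hxy.2.1

lemma avG_mono {V : Type} {A A' : Finset (Sym2 V)} (S : Finset V) (h : A ⊆ A') : avG A S ≤ avG A' S :=
  fun _ _ hu => ⟨hu.1, h hu.2.1, hu.2.2⟩

lemma success (d m L : ℕ) (hd : 1 ≤ d) (hn : d + 1 ≤ n) (σ : EdgeOrdering n) (t : ℕ) (ht : t ≤ numEdges n) (hLt : L ≤ t)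
    (hY : ∃ Y, Linked d (run1 T B col (history σ L).reverse) Y ∧ Fintype.card (Fin n) ≤ Y.card + m)
    (hX : ∀ x, x ∉ chooseY d m (run1 T B col (history σ L).reverse) →
      ∃ F : Finset (Sym2 (Fin n)), d ≤ F.card ∧ ∀ e ∈ F, e ∈ (history σ t).drop L ∧
        ∃ y ∈ chooseY d m (run1 T B col (history σ L).reverse), e = s(x, y)) :
    IsKConnected d (builderGraph (theStrat T B col d m L) σ t) := by
  refine ⟨by simpa using hn, fun S hS => ?_⟩
  set G := builderGraph (theStrat T B col d m L) σ t with hG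
  have hl := chooseY_linked d m _ hY
  set A1 := run1 T B col (history σ L).reverse with hA1
  set Y := chooseY d m A1 with hYd
  set A2 := run2 d Y ((history σ t).drop L).reverse with hA2
  have htot : ∀ e, e ∈ tot T B col d m L (history σ t) ↔ e ∈ A1 ∨ e ∈ A2 := by
    intro e
    rw [mem_tot, history_take σ L t hLt]
  set At := tot T B col d m L (history σ t) with hAt
  have hGadj : ∀ u v, u ≠ v → s(u, v) ∈ At → G.Adj u v := by
    intro u v hne h
    exact builder_adj T B col d m L σ t ht u v hne h
  have hstep : ∀ x, x ∉ S → ∃ y, y ∈ Y ∧ y ∉ S ∧ (avG At S).Reachable x y := by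
    intro x hxS
    by_cases hxY : x ∈ Y
    · exact ⟨x, hxY, hxS, SimpleGraph.Reachable.refl _⟩
    · have hdeg : d ≤ (A2.filter (fun e => x ∈ e)).card := by
        rcases run2_full d Y ((history σ t).drop L).reverse x hxY with h | h
        · convert h
        · obtain ⟨F, hF, hFe⟩ := hX x hxY
          refine hF.trans (Finset.card_le_card ?_)
          intro e he
          obtain ⟨h1, y, hy, rfl⟩ := hFe e he
          rw [Finset.mem_filter]
          exact ⟨h y hy (by rw [List.mem_reverse]; exact h1), Sym2.mem_mk_left _ _⟩
      have hex : ∃ y, y ∉ S ∧ s(x, y) ∈ A2 := by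
        by_contra hcon
        push Not at hcon
        have hsub : A2.filter (fun e => x ∈ e) ⊆ S.image (fun y => s(x, y)) := by
          intro e he
          rw [Finset.mem_filter] at he
          obtain ⟨y, rfl⟩ := Sym2.mem_iff_exists.1 he.2
          rw [Finset.mem_image]
          refine ⟨y, ?_, rfl⟩
          by_contra hy
          exact hcon y hy he.1
        have := (Finset.card_le_card hsub).trans Finset.card_image_le
        omega
      obtain ⟨y, hyS, hy⟩ := hex
      have hyY : y ∈ Y := by
        obtain ⟨x', y', he, hx', hy'⟩ := run2_typ d Y _ _ hy
        rw [Sym2.eq_iff] at he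
        rcases he with ⟨rfl, rfl⟩ | ⟨rfl, rfl⟩
        · exact hy'
        · exact (hxY hy').elim
      refine ⟨y, hyY, hyS, SimpleGraph.Adj.reachable ⟨?_, (htot _).2 (Or.inr hy), hxS, hyS⟩⟩
      rintro rfl
      exact hxY hyY
  rw [SimpleGraph.connected_iff]
  constructor
  · rintro ⟨u, hu⟩ ⟨v, hv⟩
    have hu' : u ∉ S := by simpa using hu
    have hv' : v ∉ S := by simpa using hv
    obtain ⟨y, hy, hyS, hr⟩ := hstep u hu'
    obtain ⟨z, hz, hzS, hr'⟩ := hstep v hv'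
    have h1 := (hl S hS y hy z hz hyS hzS).mono (avG_mono S (fun e he => (htot e).2 (Or.inl he) : A1 ⊆ At))
    obtain ⟨_, h2⟩ := avG_induce At S G hGadj u v ((hr.trans h1).trans hr'.symm) hu'
    exact h2
  · have : S ≠ Finset.univ := by
      rintro rfl
      simp at hS
      omega
    obtain ⟨x, hx⟩ : ∃ x, x ∉ S := by
      by_contra hcon
      push Not at hcon
      exact this (Finset.eq_univ_of_forall hcon)
    exact ⟨⟨x, by simpa using hx⟩⟩

end strat2

section prob

lemma edge_mem {n : ℕ} {x y : Fin n} (h : x ≠ y) : s(x, y) ∈ (completeGraph (Fin n)).edgeSet := by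
  rw [SimpleGraph.mem_edgeSet]; exact h

def PQF {n : ℕ} (P Q : Finset (Fin n)) : Finset (EE n) :=
  Finset.univ.filter (fun e : EE n => ∃ p ∈ P, ∃ q ∈ Q, (e : Sym2 (Fin n)) = s(p, q))

def starF {n : ℕ} (x : Fin n) : Finset (EE n) :=
  Finset.univ.filter (fun e : EE n => x ∈ (e : Sym2 (Fin n)))

def FxY {n : ℕ} (x : Fin n) (Y : Finset (Fin n)) (h : List (Sym2 (Fin n))) : Finset (EE n) :=
  Finset.univ.filter (fun e : EE n => (e : Sym2 (Fin n)) ∉ h ∧ ∃ y ∈ Y, (e : Sym2 (Fin n)) = s(x, y))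

lemma starF_card {n : ℕ} (x : Fin n) : (starF x).card ≤ n := by
  have h1 : ((starF x).image (fun e : EE n => (e : Sym2 (Fin n)))).card = (starF x).card :=
    Finset.card_image_of_injective _ Subtype.val_injective
  rw [← h1]
  have hsub : (starF x).image (fun e : EE n => (e : Sym2 (Fin n))) ⊆
      Finset.univ.image (fun y => s(x, y)) := by
    intro e he
    rw [Finset.mem_image] at he
    obtain ⟨e', he', rfl⟩ := he
    rw [starF, Finset.mem_filter] at he'
    obtain ⟨y, hy⟩ := Sym2.mem_iff_exists.1 he'.2
    rw [Finset.mem_image]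
    exact ⟨y, Finset.mem_univ _, hy.symm⟩
  refine (Finset.card_le_card hsub).trans (Finset.card_image_le.trans ?_)
  simp

lemma PQF_card {n : ℕ} (P Q : Finset (Fin n)) (hd : Disjoint P Q) : P.card * Q.card ≤ (PQF P Q).card := by
  rw [← Finset.card_product]
  have hne : ∀ z ∈ P ×ˢ Q, z.1 ≠ z.2 := by
    intro z hz
    rw [Finset.mem_product] at hz
    exact Finset.disjoint_iff_ne.1 hd _ hz.1 _ hz.2
  have h1 : ((PQF P Q).image (fun e : EE n => (e : Sym2 (Fin n)))).card = (PQF P Q).card :=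
    Finset.card_image_of_injective _ Subtype.val_injective
  rw [← h1]
  apply Finset.card_le_card_of_injOn (fun z => s(z.1, z.2))
  · intro z hz
    have hz' := Finset.mem_coe.1 hz
    have hz2 := Finset.mem_product.1 hz'
    rw [Finset.mem_coe, Finset.mem_image]
    refine ⟨⟨s(z.1, z.2), edge_mem (hne z hz')⟩, ?_, rfl⟩
    rw [PQF, Finset.mem_filter]
    exact ⟨Finset.mem_univ _, z.1, hz2.1, z.2, hz2.2, rfl⟩
  · intro z hz w hw h
    have hz2 := Finset.mem_product.1 (Finset.mem_coe.1 hz)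
    have hw2 := Finset.mem_product.1 (Finset.mem_coe.1 hw)
    simp only [Sym2.eq_iff] at h
    rcases h with h | h
    · exact Prod.ext h.1 h.2
    · exact (Finset.disjoint_iff_ne.1 hd _ hz2.1 _ hw2.2 h.1).elim

lemma FxY_card {n : ℕ} (x : Fin n) (Y : Finset (Fin n)) (hx : x ∉ Y) (σ : EdgeOrdering n) (L : ℕ) :
    Y.card ≤ (FxY x Y (history σ L)).card + hits (fun _ => starF x) 0 L σ := by
  have h1 : (((starF x).filter (fun e : EE n => (e : Sym2 (Fin n)) ∈ history σ L)).image (fun e => σ e)).card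
      = ((starF x).filter (fun e : EE n => (e : Sym2 (Fin n)) ∈ history σ L)).card :=
    Finset.card_image_of_injective _ σ.injective
  have h2 : ((starF x).filter (fun e : EE n => (e : Sym2 (Fin n)) ∈ history σ L)).card ≤
      hits (fun _ => starF x) 0 L σ := by
    rw [← h1, hits]
    apply Finset.card_le_card
    intro r hr
    rw [Finset.mem_image] at hr
    obtain ⟨e, he, rfl⟩ := hr
    rw [Finset.mem_filter] at he ⊢
    exact ⟨Finset.mem_univ _, Nat.zero_le _, of_mem_history σ L e he.2, by simpa using he.1⟩
  refine le_trans ?_ (Nat.add_le_add_left h2 _)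
  refine le_trans ?_ (Finset.card_union_le _ _)
  set U := FxY x Y (history σ L) ∪ (starF x).filter (fun e : EE n => (e : Sym2 (Fin n)) ∈ history σ L) with hU
  have h3 : (U.image (fun e : EE n => (e : Sym2 (Fin n)))).card = U.card :=
    Finset.card_image_of_injective _ Subtype.val_injective
  have goal2 : Y.card ≤ U.card := by
    rw [← h3]
    apply Finset.card_le_card_of_injOn (fun y => s(x, y))
    · intro y hy
      have hy' := Finset.mem_coe.1 hy
      have hne : x ≠ y := by rintro rfl; exact hx hy'
      rw [Finset.mem_coe, Finset.mem_image]
      refine ⟨⟨s(x, y), edge_mem hne⟩, ?_, rfl⟩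
      rw [hU, Finset.mem_union]
      by_cases hm : s(x, y) ∈ history σ L
      · right
        rw [Finset.mem_filter, starF, Finset.mem_filter]
        exact ⟨⟨Finset.mem_univ _, Sym2.mem_mk_left _ _⟩, hm⟩
      · left
        rw [FxY, Finset.mem_filter]
        exact ⟨Finset.mem_univ _, hm, y, hy', rfl⟩
    · intro y _ z _ h
      exact Sym2.congr_right.1 h
  convert goal2

lemma hits_to_F {n : ℕ} (F : EdgeOrdering n → Finset (EE n)) (L t : ℕ) (σ : EdgeOrdering n) :
    ∃ F' : Finset (Sym2 (Fin n)), F'.card = hits F L t σ ∧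
      ∀ e ∈ F', e ∈ (history σ t).drop L ∧ ∃ e' ∈ F σ, e = (e' : Sym2 (Fin n)) := by
  refine ⟨(Finset.univ.filter (fun r : Fin (numEdges n) => L ≤ (r : ℕ) ∧ (r : ℕ) < t ∧ σ.symm r ∈ F σ)).image
    (fun r => ((σ.symm r : EE n) : Sym2 (Fin n))), ?_, ?_⟩
  · rw [hits]
    apply Finset.card_image_of_injective
    exact Subtype.val_injective.comp σ.symm.injective
  · intro e he
    rw [Finset.mem_image] at he
    obtain ⟨r, hr, rfl⟩ := he
    rw [Finset.mem_filter] at hr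
    exact ⟨history_drop_mem σ L t r hr.2.1 hr.2.2.1, _, hr.2.2.2, rfl⟩

lemma prob_bound {n : ℕ} {α : Type} [Fintype α] (T : SimpleGraph α) (B : Finset α) (col : Fin n → α)
    (d m L t g R D : ℕ) (hd : 1 ≤ d) (hn : d + 1 ≤ n) (ht : t ≤ numEdges n) (hLt : L ≤ t)
    (hLN : 2 * L ≤ numEdges n)
    (hT : ∀ S : Finset α, S.card ≤ d - 1 → ∃ b ∈ B, b ∉ S ∧ ∀ c, ∃ k ≤ R, AvN T S k c b)
    (hg : 1 ≤ g)
    (hbal : ∀ c c', (Finset.univ.filter (fun v => col v = c)).card ≤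
      (Finset.univ.filter (fun v => col v = c')).card + 1)
    (hbig : ∀ c, 3 * g ≤ (Finset.univ.filter (fun v => col v = c)).card)
    (hm : (1 + Fintype.card α) ^ R * (Fintype.card α * Fintype.card α * g + Fintype.card α * g) ≤ m)
    (f : ℝ) (hf : f + m + D ≤ n) (hfd : (d : ℝ) ≤ f) (s : ℝ) (hs0 : 0 < s) (hs1 : s < 1) :
    ((Finset.univ.filter (fun σ : EdgeOrdering n =>
      ¬ IsKConnected d (builderGraph (theStrat T B col d m L) σ t))).card : ℝ) ≤
    (Fintype.card (EdgeOrdering n) : ℝ) *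
      (4 ^ n * (2 * Real.exp (-((g * g - 1) / (2 * numEdges n) * L))) +
       n * ((2⁻¹) ^ D * Real.exp (2 * n / numEdges n * L)) +
       n * ((s⁻¹) ^ d * Real.exp (-((1 - s) * (f - d) / (numEdges n) * ((t : ℝ) - L))))) := by
  set YY : List (Sym2 (Fin n)) → Finset (Fin n) := fun h => chooseY d m (run1 T B col h.reverse) with hYY
  set FF : Fin n → EdgeOrdering n → Finset (EE n) := fun x σ => FxY x (YY (history σ L)) (history σ L) with hFF
  set w : Fin n → EdgeOrdering n → ℝ := fun x σ =>
    if x ∉ YY (history σ L) ∧ f ≤ ((FF x σ).card : ℝ) then 1 else 0 with hw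
  set pairs := (Finset.univ : Finset (Finset (Fin n) × Finset (Fin n))).filter
    (fun z => Disjoint z.1 z.2 ∧ g ≤ z.1.card ∧ g ≤ z.2.card) with hpairs
  -- pointwise bound
  have hpt : ∀ σ : EdgeOrdering n,
      (if ¬ IsKConnected d (builderGraph (theStrat T B col d m L) σ t) then (1:ℝ) else 0) ≤
      (∑ z ∈ pairs, 1 * (if hits (fun _ => PQF z.1 z.2) 0 L σ < 1 then (1:ℝ) else 0)) +
      (∑ x : Fin n, (if D ≤ hits (fun _ => starF x) 0 L σ then (1:ℝ) else 0)) +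
      (∑ x : Fin n, w x σ * (if hits (FF x) L t σ < d then (1:ℝ) else 0)) := by
    intro σ
    have hw0 : ∀ x, 0 ≤ w x σ := by
      intro x; simp only [hw]; split_ifs <;> norm_num
    have n1 : 0 ≤ (∑ z ∈ pairs, 1 * (if hits (fun _ => PQF z.1 z.2) 0 L σ < 1 then (1:ℝ) else 0)) :=
      Finset.sum_nonneg (fun z _ => by split_ifs <;> norm_num)
    have n2 : 0 ≤ (∑ x : Fin n, (if D ≤ hits (fun _ => starF x) 0 L σ then (1:ℝ) else 0)) :=
      Finset.sum_nonneg (fun z _ => by split_ifs <;> norm_num)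
    have n3 : 0 ≤ (∑ x : Fin n, w x σ * (if hits (FF x) L t σ < d then (1:ℝ) else 0)) :=
      Finset.sum_nonneg (fun z _ => mul_nonneg (hw0 z) (by split_ifs <;> norm_num))
    by_cases hk : IsKConnected d (builderGraph (theStrat T B col d m L) σ t)
    · rw [if_neg (not_not.2 hk)]; positivity
    rw [if_pos hk]
    by_cases e1 : ∃ z ∈ pairs, hits (fun _ => PQF z.1 z.2) 0 L σ < 1
    · obtain ⟨z, hz, hz'⟩ := e1
      have := Finset.single_le_sum (f := fun z => 1 * (if hits (fun _ => PQF z.1 z.2) 0 L σ < 1 then (1:ℝ) else 0))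
        (fun z _ => by split_ifs <;> norm_num) hz
      simp only [if_pos hz'] at this
      linarith
    by_cases e2 : ∃ x, D ≤ hits (fun _ => starF x) 0 L σ
    · obtain ⟨x, hx⟩ := e2
      have := Finset.single_le_sum (f := fun x => (if D ≤ hits (fun _ => starF x) 0 L σ then (1:ℝ) else 0))
        (fun z _ => by split_ifs <;> norm_num) (Finset.mem_univ x)
      simp only [if_pos hx] at this
      linarith
    push Not at e1 e2
    obtain ⟨Y, hYl, hYc⟩ := linked_exists T B col d R hT (history σ L).reverse g hg (by
      intro P Q hPQ hP hQ
      have hh := e1 (P, Q) (by rw [hpairs, Finset.mem_filter]; exact ⟨Finset.mem_univ _, hPQ, hP, hQ⟩)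
      obtain ⟨F', hF', hF2⟩ := hits_to_F (fun _ => PQF P Q) 0 L σ
      simp only at hh
      rw [← hF'] at hh
      obtain ⟨e, he⟩ := Finset.card_pos.1 hh
      obtain ⟨h1, e', he', rfl⟩ := hF2 e he
      rw [PQF, Finset.mem_filter] at he'
      obtain ⟨_, p, hp, q, hq, heq⟩ := he'
      refine ⟨p, hp, q, hq, ?_⟩
      rw [List.mem_reverse, ← heq]
      simpa using h1) hbal hbig
    have hYc2 : Fintype.card (Fin n) ≤ Y.card + m := by
      omega
    by_contra hcon
    apply hk
    apply success T B col d m L hd hn σ t ht hLt ⟨Y, hYl, hYc2⟩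
    intro x hx
    have hx' : x ∉ YY (history σ L) := hx
    have hdh : d ≤ hits (FF x) L t σ := by
      by_contra hlt
      push Not at hlt
      apply hcon
      have hwx : w x σ = 1 := by
        simp only [hw]
        rw [if_pos]
        refine ⟨hx', ?_⟩
        have h1 := FxY_card x (YY (history σ L)) hx' σ L
        have h2 := e2 x
        have h3 : Fintype.card (Fin n) ≤ (YY (history σ L)).card + m := chooseY_card d m _
        rw [Fintype.card_fin] at h3
        have h4 : n ≤ (FF x σ).card + D + m := by
          simp only [hFF]; omega
        have h5 : (n : ℝ) ≤ (FF x σ).card + D + m := by exact_mod_cast h4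
        linarith
      have := Finset.single_le_sum (f := fun x => w x σ * (if hits (FF x) L t σ < d then (1:ℝ) else 0))
        (fun z _ => mul_nonneg (hw0 z) (by split_ifs <;> norm_num)) (Finset.mem_univ x)
      simp only [if_pos hlt, hwx] at this
      linarith
    obtain ⟨F', hF', hF2⟩ := hits_to_F (FF x) L t σ
    refine ⟨F', hF' ▸ hdh, fun e he => ?_⟩
    obtain ⟨h1, e', he', rfl⟩ := hF2 e he
    simp only [hFF, FxY, Finset.mem_filter] at he'
    exact ⟨h1, he'.2.2⟩
  have hcardsum : ((Finset.univ.filter (fun σ : EdgeOrdering n =>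
      ¬ IsKConnected d (builderGraph (theStrat T B col d m L) σ t))).card : ℝ) =
      ∑ σ : EdgeOrdering n, (if ¬ IsKConnected d (builderGraph (theStrat T B col d m L) σ t) then (1:ℝ) else 0) := by
    rw [Finset.sum_boole]
  rw [hcardsum]
  refine (Finset.sum_le_sum (fun σ _ => hpt σ)).trans ?_
  rw [Finset.sum_add_distrib, Finset.sum_add_distrib, Finset.sum_comm]
  rw [Finset.sum_comm (s := Finset.univ) (t := (Finset.univ : Finset (Fin n)))
    (f := fun σ x => (if D ≤ hits (fun _ => starF x) 0 L σ then (1:ℝ) else 0))]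
  rw [Finset.sum_comm (s := Finset.univ) (t := (Finset.univ : Finset (Fin n)))
    (f := fun σ x => w x σ * (if hits (FF x) L t σ < d then (1:ℝ) else 0))]
  set c := (Fintype.card (EdgeOrdering n) : ℝ) with hc
  have hc0 : 0 ≤ c := Nat.cast_nonneg _
  have hg1 : (1:ℝ) ≤ g := by exact_mod_cast hg
  have b1 : ∑ z ∈ pairs, ∑ σ : EdgeOrdering n, 1 * (if hits (fun _ => PQF z.1 z.2) 0 L σ < 1 then (1:ℝ) else 0) ≤
      4 ^ n * (c * (2 * Real.exp (-((g * g - 1) / (2 * numEdges n) * L)))) := by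
    have : ∀ z ∈ pairs, ∑ σ : EdgeOrdering n, 1 * (if hits (fun _ => PQF z.1 z.2) 0 L σ < 1 then (1:ℝ) else 0) ≤
        c * (2 * Real.exp (-((g * g - 1) / (2 * numEdges n) * L))) := by
      intro z hz
      rw [hpairs, Finset.mem_filter] at hz
      have hcard : g * g ≤ (PQF z.1 z.2).card :=
        (Nat.mul_le_mul hz.2.2.1 hz.2.2.2).trans (PQF_card z.1 z.2 hz.2.1)
      have hlt := low_tail (n := n) 0 L 1 (by omega) (Nat.zero_le _) (fun _ => 1) (fun _ => PQF z.1 z.2)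
        (fun _ _ _ _ _ => rfl) (fun _ _ _ _ _ => rfl) (fun _ => zero_le_one) (fun _ => le_refl _)
        (fun _ _ _ _ => Nat.zero_le _) (g * g : ℝ) (fun _ _ => by exact_mod_cast hcard)
        (by push_cast; nlinarith) (1/2) (by norm_num) (by norm_num)
      refine hlt.trans (le_of_eq ?_)
      rw [hc]
      congr 2
      · norm_num
      · congr 1
        push_cast
        by_cases hN : (numEdges n : ℝ) = 0
        · rw [hN]; simp
        · field_simp
          ring
    refine (Finset.sum_le_card_nsmul _ _ _ this).trans ?_
    rw [nsmul_eq_mul]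
    apply mul_le_mul_of_nonneg_right
    · have h1 : pairs.card ≤ 4 ^ n := by
        refine (Finset.card_filter_le _ _).trans ?_
        rw [Finset.card_univ, Fintype.card_prod, Fintype.card_finset, Fintype.card_fin, ← mul_pow]
        norm_num
      exact_mod_cast h1
    · positivity
  have b2 : ∑ x : Fin n, ∑ σ : EdgeOrdering n, (if D ≤ hits (fun _ => starF x) 0 L σ then (1:ℝ) else 0) ≤
      n * (c * ((2⁻¹) ^ D * Real.exp (2 * n / numEdges n * L))) := by
    have : ∀ x ∈ (Finset.univ : Finset (Fin n)), ∑ σ : EdgeOrdering n, (if D ≤ hits (fun _ => starF x) 0 L σ then (1:ℝ) else 0) ≤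
        c * ((2⁻¹) ^ D * Real.exp (2 * n / numEdges n * L)) := by
      intro x _
      refine (up_tail L hLN (starF x) D).trans ?_
      have : ((starF x).card : ℝ) ≤ n := by exact_mod_cast starF_card x
      gcongr
    refine (Finset.sum_le_card_nsmul _ _ _ this).trans ?_
    rw [nsmul_eq_mul, Finset.card_univ, Fintype.card_fin]
  have b3 : ∑ x : Fin n, ∑ σ : EdgeOrdering n, w x σ * (if hits (FF x) L t σ < d then (1:ℝ) else 0) ≤
      n * (c * ((s⁻¹) ^ d * Real.exp (-((1 - s) * (f - d) / (numEdges n) * ((t : ℝ) - L))))) := by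
    have : ∀ x ∈ (Finset.univ : Finset (Fin n)), ∑ σ : EdgeOrdering n, w x σ * (if hits (FF x) L t σ < d then (1:ℝ) else 0) ≤
        c * ((s⁻¹) ^ d * Real.exp (-((1 - s) * (f - d) / (numEdges n) * ((t : ℝ) - L)))) := by
      intro x _
      have hwf : ∀ σ, w x σ ≠ 0 → f ≤ ((FF x σ).card : ℝ) := by
        intro σ h
        by_contra hcon
        apply h
        simp only [hw]
        rw [if_neg]
        exact fun h' => hcon h'.2
      apply low_tail L t d ht hLt (w x) (FF x)
      · intro σ i j hi hj
        have := history_inv L σ i j hi hj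
        simp only at this
        simp only [hw, hFF, this]
      · intro σ i j hi hj
        have := history_inv L σ i j hi hj
        simp only at this
        simp only [hFF, this]
      · intro σ; simp only [hw]; split_ifs <;> norm_num
      · intro σ; simp only [hw]; split_ifs <;> norm_num
      · intro σ _ e he
        simp only [hFF, FxY, Finset.mem_filter] at he
        by_contra hlt
        push Not at hlt
        exact he.2.1 (mem_history σ L e hlt)
      · exact hwf
      · exact hfd
      · exact hs0
      · exact hs1
    refine (Finset.sum_le_card_nsmul _ _ _ this).trans ?_
    rw [nsmul_eq_mul, Finset.card_univ, Fintype.card_fin]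
  refine (add_le_add (add_le_add b1 b2) b3).trans (le_of_eq ?_)
  ring

end prob

section consts

lemma template_R (d : ℕ) (hd : 2 ≤ d) (M0 : ℕ) : ∃ (α : Type) (_ : Fintype α) (T : SimpleGraph α) (B : Finset α)
    (R : ℕ), M0 ≤ Fintype.card α ∧ 0 < Fintype.card α ∧ B.card ≤ d ∧
    (∀ c, (Finset.univ.filter (fun c' => T.Adj c c')).card ≤ d) ∧
    ∀ S : Finset α, S.card ≤ d - 1 → ∃ b ∈ B, b ∉ S ∧ ∀ c, ∃ k ≤ R, AvN T S k c b := by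
  obtain ⟨α, inst, T, B, h1, h2, h3, h4, h5⟩ := template d hd M0
  have key : ∀ S : Finset α, ∃ r : ℕ, S.card ≤ d - 1 → ∃ b ∈ B, b ∉ S ∧ ∀ c, ∃ k ≤ r, AvN T S k c b := by
    intro S
    by_cases hS : S.card ≤ d - 1
    · obtain ⟨b, hb, hbS, hr⟩ := h5 S hS
      have : ∀ c, ∃ k, AvN T S k c b := fun c => (hr c).exists_AvN
      choose k hk using this
      exact ⟨Finset.univ.sup k, fun _ => ⟨b, hb, hbS, fun c => ⟨k c, Finset.le_sup (Finset.mem_univ c), hk c⟩⟩⟩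
    · exact ⟨0, fun h => (hS h).elim⟩
  choose r hr using key
  refine ⟨α, inst, T, B, Finset.univ.sup r, h1, h2, h3, h4, fun S hS => ?_⟩
  obtain ⟨b, hb, hbS, hc⟩ := hr S hS
  refine ⟨b, hb, hbS, fun c => ?_⟩
  obtain ⟨k, hk, hk'⟩ := hc c
  exact ⟨k, hk.trans (Finset.le_sup (Finset.mem_univ S)), hk'⟩

lemma class_card (n M j : ℕ) (hM : 0 < M) (hj : j < M) :
    n / M ≤ (Finset.univ.filter (fun v : Fin n => (v : ℕ) % M = j)).card ∧
    (Finset.univ.filter (fun v : Fin n => (v : ℕ) % M = j)).card ≤ n / M + 1 := by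
  have h1 : (Finset.univ.filter (fun v : Fin n => (v : ℕ) % M = j)).card = n.count (· ≡ j [MOD M]) := by
    rw [Nat.count_eq_card_filter_range, Finset.card_filter, Finset.card_filter,
      Fin.sum_univ_eq_sum_range (fun i => if i % M = j then 1 else 0) n]
    apply Finset.sum_congr rfl
    intro i _
    simp only [Nat.ModEq, Nat.mod_eq_of_lt hj]
  rw [h1, Nat.count_modEq_card _ hM]
  split_ifs <;> omega

lemma exists_col (n : ℕ) (α : Type) [Fintype α] (hM : 0 < Fintype.card α) : ∃ col : Fin n → α, ∀ c,
    n / Fintype.card α ≤ (Finset.univ.filter (fun v => col v = c)).card ∧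
    (Finset.univ.filter (fun v => col v = c)).card ≤ n / Fintype.card α + 1 := by
  set e := Fintype.equivFin α with he
  refine ⟨fun v => e.symm ⟨(v : ℕ) % Fintype.card α, Nat.mod_lt _ hM⟩, fun c => ?_⟩
  have := class_card n (Fintype.card α) (e c) hM (e c).2
  have heq : (Finset.univ.filter (fun v : Fin n => e.symm ⟨(v : ℕ) % Fintype.card α, Nat.mod_lt _ hM⟩ = c)) =
      (Finset.univ.filter (fun v : Fin n => (v : ℕ) % Fintype.card α = (e c : ℕ))) := by
    ext v
    simp only [Finset.mem_filter, Finset.mem_univ, true_and]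
    rw [Equiv.symm_apply_eq, Fin.ext_iff]
  rw [heq]
  exact this

lemma numEdges_real (n : ℕ) : (numEdges n : ℝ) = n * (n - 1) / 2 := by
  have : numEdges n = n.choose 2 := by
    have h := SimpleGraph.card_edgeFinset_top_eq_card_choose_two (V := Fin n)
    rw [Fintype.card_fin] at h
    rw [← h, numEdges, SimpleGraph.edgeFinset_card]
  rw [this, Nat.cast_choose_two]

end consts

section eventual
open Topology

lemma ev1 (K : ℝ) : ∀ᶠ n : ℕ in atTop, K ≤ (n : ℝ) := tendsto_natCast_atTop_atTop.eventually_ge_atTop K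

lemma ev2 (K : ℝ) : ∀ᶠ n : ℕ in atTop, K ≤ Real.log n :=
  (Real.tendsto_log_atTop.comp tendsto_natCast_atTop_atTop).eventually_ge_atTop K

lemma ev3 : ∀ᶠ n : ℕ in atTop, (n : ℝ) * Real.log n + 1 ≤ n * n / 4 := by
  have h : ∀ᶠ x : ℝ in atTop, ‖Real.log x‖ ≤ (1/8) * ‖x‖ := Real.isLittleO_log_id_atTop.def (by norm_num)
  have h' := tendsto_natCast_atTop_atTop.eventually h
  filter_upwards [h', ev1 4] with n h1 h2
  have h3 : Real.log n ≤ 1/8 * n := by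
    have := (le_abs_self _).trans h1
    rwa [Real.norm_of_nonneg (by linarith)] at this
  nlinarith

lemma ev4 (c K δ : ℝ) (hc : 0 < c) (hδ : 0 < δ) :
    ∀ᶠ n : ℕ in atTop, (n : ℝ) * (K * Real.exp (-(c * n))) ≤ δ := by
  have h : Tendsto (fun x : ℝ => x ^ 1 * Real.exp (-c * x)) atTop (𝓝 0) := by
    have := Real.tendsto_pow_mul_exp_neg_atTop_nhds_zero 1
    have h2 := this.comp (tendsto_id.const_mul_atTop hc)
    have h3 := h2.const_mul (1/c)
    rw [mul_zero] at h3
    refine h3.congr ?_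
    intro x
    simp only [Function.comp, id]
    field_simp
  have h2 := (h.const_mul K).comp tendsto_natCast_atTop_atTop
  rw [mul_zero] at h2
  filter_upwards [h2.eventually_le_const hδ] with n hn
  refine le_trans (le_of_eq ?_) hn
  simp only [Function.comp, pow_one]
  rw [show -(c * (n:ℝ)) = -c * n by ring]
  ring

lemma ev5 (c K δ : ℝ) (hc : 0 < c) (hδ : 0 < δ) :
    ∀ᶠ n : ℕ in atTop, K * Real.exp (-(c * Real.log n)) ≤ δ := by
  have h : Tendsto (fun x : ℝ => Real.exp (-x)) atTop (𝓝 0) := Real.tendsto_exp_neg_atTop_nhds_zero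
  have h2 := h.comp ((Real.tendsto_log_atTop.comp tendsto_natCast_atTop_atTop).const_mul_atTop hc)
  have h3 := (h2.const_mul K)
  rw [mul_zero] at h3
  filter_upwards [h3.eventually_le_const hδ] with n hn
  exact hn

end eventual

section fixed

set_option maxHeartbeats 4000000 in
lemma fixed_eps (d : ℕ) (hd : 2 ≤ d) (ε : ℝ) (hε : 0 < ε) (hε1 : ε ≤ 1) :
    ∀ᶠ n : ℕ in atTop, ∃ strat : Strategy n,
      (∀ σ : EdgeOrdering n, numAccepted strat σ ⌈(1 + ε) * n * Real.log n / 2⌉₊ ≤ ⌈(1 + ε) * d * n / 2⌉₊) ∧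
      ((Finset.univ.filter (fun σ : EdgeOrdering n =>
        ¬ IsKConnected d (builderGraph strat σ ⌈(1 + ε) * n * Real.log n / 2⌉₊))).card : ℝ) ≤
        (Fintype.card (EdgeOrdering n) : ℝ) * ε := by
  obtain ⟨M0, hM0⟩ := exists_nat_ge (8 / ε)
  obtain ⟨α, inst, T, B, R, hMM, hMpos, hBd, hdeg, hT⟩ := template_R d hd M0
  set M := Fintype.card α with hM
  set η : ℝ := ε / 16 with hη
  have hη0 : 0 < η := by rw [hη]; linarith
  set Q : ℕ := (1 + M) ^ R * (M * M + M) with hQ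
  obtain ⟨Γ, hΓ⟩ := exists_nat_ge (max (Q / η) (3 * M + 1))
  have hΓQ : (Q : ℝ) ≤ η * Γ := by
    have := (le_max_left _ _).trans hΓ
    rw [div_le_iff₀ hη0] at this
    linarith
  have hΓM : 3 * M + 1 ≤ Γ := by
    have := (le_max_right _ _).trans hΓ
    exact_mod_cast this
  have hΓpos : (0:ℝ) < Γ := by exact_mod_cast (by omega : 0 < Γ)
  set C : ℕ := 32 * Γ * Γ with hC
  have hlog2 := Real.log_pos (by norm_num : (1:ℝ) < 2)
  have hMr : (8:ℝ) / ε ≤ M := hM0.trans (by exact_mod_cast hMM)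
  have hMr0 : (0:ℝ) < M := by exact_mod_cast hMpos
  filter_upwards [ev1 (4 * Γ), ev1 (8 * C), ev1 (d + 1), ev1 (16 * (d + 1) / ε), ev1 (4 / ε), ev1 4, ev2 (32 * C / ε), ev2 1,
    ev1 (2 * d), ev3, ev4 2 2 (ε / 3) (by norm_num) (by linarith),
    ev4 (η * Real.log 2) (2 * Real.exp (8 * C)) (ε / 3) (by positivity) (by linarith),
    ev5 (ε / 4) ((η⁻¹) ^ d) (ε / 3) (by linarith) (by linarith)] with
    n n4Γ n8C nd ndε n4ε n4 nlC nl1 n2d nt e1 e2 e3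
  obtain ⟨col, hcol⟩ := exists_col n α hMpos
  set m : ℕ := ⌊η * n⌋₊ with hm
  set L : ℕ := C * n with hL
  set t : ℕ := ⌈(1 + ε) * n * Real.log n / 2⌉₊ with ht
  set g : ℕ := n / Γ with hg
  have hn0 : (0:ℝ) < n := by linarith
  have hmle : (m : ℝ) ≤ η * n := Nat.floor_le (by positivity)
  have hmgt : η * n < m + 1 := Nat.lt_floor_add_one _
  have hN := numEdges_real n
  have hNle : (numEdges n : ℝ) ≤ n * n / 2 := by rw [hN]; linarith
  have hNge : (n : ℝ) * n / 4 ≤ numEdges n := by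
    have := mul_le_mul_of_nonneg_left n4 hn0.le
    rw [hN]; linarith
  have hN0 : (0:ℝ) < numEdges n := by
    have := mul_pos hn0 hn0
    linarith
  have htge : (1 + ε) * n * Real.log n / 2 ≤ t := Nat.le_ceil _
  have hlog0 : 0 < Real.log n := by linarith
  have htlt : (t : ℝ) < (1 + ε) * n * Real.log n / 2 + 1 := Nat.ceil_lt_add_one (by positivity)
  have hLr : (L : ℝ) = C * n := by rw [hL]; push_cast; ring
  have hCε : 32 * C ≤ ε * Real.log n := by
    rw [div_le_iff₀ hε] at nlC; linarith
  refine ⟨theStrat T B col d m L, ?_, ?_⟩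
  · intro σ
    obtain ⟨h, hh⟩ := builder_num T B col d m L σ t
    have hK : (Finset.univ.filter (fun v => col v ∈ B)).card ≤ d * (n / M + 1) := by
      have hsub : (Finset.univ.filter (fun v => col v ∈ B)) ⊆
          B.biUnion (fun b => Finset.univ.filter (fun v => col v = b)) := by
        intro v hv
        rw [Finset.mem_biUnion]
        refine ⟨col v, by simpa using hv, by simp⟩
      refine (Finset.card_le_card hsub).trans ?_
      refine (Finset.card_biUnion_le_card_mul _ _ (n / M + 1) (fun b _ => (hcol b).2)).trans ?_
      exact Nat.mul_le_mul_right _ hBd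
    have h2 := tot_card T B col d m L _ hdeg hK h
    rw [Fintype.card_fin] at h2
    have h3 : 2 * numAccepted (theStrat T B col d m L) σ t ≤ d * n + 2 * (d * (n / M + 1)) + 2 * (d * m) := by omega
    have h4 : (2:ℝ) * numAccepted (theStrat T B col d m L) σ t ≤
        d * n + 2 * (d * (((n / M : ℕ) : ℝ) + 1)) + 2 * (d * m) := by exact_mod_cast h3
    have h5 : ((n / M : ℕ) : ℝ) ≤ n / M := Nat.cast_div_le
    have h6 : (n : ℝ) / M ≤ ε / 8 * n := by
      rw [div_le_iff₀ hMr0]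
      rw [div_le_iff₀ hε] at hMr
      have := mul_le_mul_of_nonneg_right hMr hn0.le
      linarith
    have h7 : 4 ≤ n * ε := by rwa [div_le_iff₀ hε] at n4ε
    have h8 : (numAccepted (theStrat T B col d m L) σ t : ℝ) ≤ (1 + ε) * d * n / 2 := by
      have hd0 : (0:ℝ) ≤ d := Nat.cast_nonneg _
      have h9 : 2 * (((n / M : ℕ) : ℝ) + 1) + 2 * m ≤ ε * n := by
        rw [hη] at hmle
        linarith
      have h10 := mul_le_mul_of_nonneg_left h9 hd0
      linarith
    exact_mod_cast h8.trans (Nat.le_ceil _)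
  · have htN : t ≤ numEdges n := by
      have : (t : ℝ) ≤ numEdges n := by
        have h1 : (1 + ε) * n * Real.log n / 2 ≤ n * Real.log n := by
          have : 0 < n * Real.log n := by positivity
          have := mul_le_mul_of_nonneg_right hε1 this.le
          linarith
        linarith
      exact_mod_cast this
    have hLt : L ≤ t := by
      have : (L : ℝ) ≤ t := by
        rw [hLr]
        refine le_trans ?_ htge
        have h1 : (2:ℝ) * C ≤ (1 + ε) * Real.log n := by
          have : (0:ℝ) ≤ C := Nat.cast_nonneg _
          linarith
        have := mul_le_mul_of_nonneg_right h1 hn0.le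
        linarith
      exact_mod_cast this
    have hLN : 2 * L ≤ numEdges n := by
      have : (2:ℝ) * L ≤ numEdges n := by
        have := mul_le_mul_of_nonneg_right n8C hn0.le
        rw [hLr]; linarith
      exact_mod_cast this
    have hΓg : Γ * g ≤ n := Nat.mul_div_le n Γ
    have hg1' : (n : ℝ) / (2 * Γ) ≤ g := by
      have h1 : n < Γ * (g + 1) := by
        rw [hg]; exact Nat.lt_mul_div_succ n (by omega)
      have h2 : (n : ℝ) < Γ * (g + 1) := by exact_mod_cast h1
      rw [div_le_iff₀ (by positivity)]
      linarith
    have hg2 : (2:ℝ) ≤ g := by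
      refine le_trans ?_ hg1'
      rw [le_div_iff₀ (by positivity)]
      linarith
    have hg1 : 1 ≤ g := by
      have : 2 ≤ g := by exact_mod_cast hg2
      omega
    have hnd : d + 1 ≤ n := by exact_mod_cast nd
    have hbig : ∀ c, 3 * g ≤ (Finset.univ.filter (fun v => col v = c)).card := by
      intro c
      refine le_trans ?_ (hcol c).1
      rw [Nat.le_div_iff_mul_le hMpos]
      calc 3 * g * M = (3 * M) * g := by ring
        _ ≤ Γ * g := Nat.mul_le_mul_right _ (by omega)
        _ ≤ n := hΓg
    have hmQ : (1 + M) ^ R * (M * M * g + M * g) ≤ m := by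
      have h1 : (1 + M) ^ R * (M * M * g + M * g) = Q * g := by rw [hQ]; ring
      rw [h1]
      apply Nat.le_floor
      push_cast
      have h2 : (Γ : ℝ) * g ≤ n := by exact_mod_cast hΓg
      calc (Q : ℝ) * g ≤ η * Γ * g := mul_le_mul_of_nonneg_right hΓQ (by positivity)
        _ = η * (Γ * g) := by ring
        _ ≤ η * n := mul_le_mul_of_nonneg_left h2 hη0.le
    have hη16 : η ≤ 1 / 16 := by rw [hη]; linarith
    have hfd : (d : ℝ) ≤ (n : ℝ) - m - m := by
      have := mul_le_mul_of_nonneg_right hη16 hn0.le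
      linarith
    have hpb := prob_bound T B col d m L t g R m (by omega) hnd htN hLt hLN hT hg1
      (fun c c' => by have := (hcol c).2; have := (hcol c').1; omega) hbig hmQ ((n : ℝ) - m - m) (by linarith) hfd
      η hη0 (by linarith)
    refine hpb.trans ?_
    apply mul_le_mul_of_nonneg_left _ (Nat.cast_nonneg _)
    have q1 : (4:ℝ) ^ n * (2 * Real.exp (-((g * g - 1) / (2 * numEdges n) * L))) ≤ ε / 3 := by
      refine le_trans ?_ e1
      have h4 : (4:ℝ) ≤ Real.exp 2 := by
        have h1 := Real.add_one_le_exp (1:ℝ)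
        have h2 : Real.exp 2 = Real.exp 1 * Real.exp 1 := by rw [← Real.exp_add]; norm_num
        have := mul_self_le_mul_self (by norm_num : (0:ℝ) ≤ 2) (by linarith : (2:ℝ) ≤ Real.exp 1)
        rw [h2]; linarith
      have h4n : (4:ℝ) ^ n ≤ Real.exp (2 * n) := by
        calc (4:ℝ) ^ n ≤ (Real.exp 2) ^ n := pow_le_pow_left₀ (by norm_num) h4 n
          _ = Real.exp (2 * n) := by rw [← Real.exp_nat_mul]; ring_nf
      have hexp : 4 * (n:ℝ) ≤ (g * g - 1) / (2 * numEdges n) * L := by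
        rw [div_mul_eq_mul_div, le_div_iff₀ (by positivity), hLr]
        have hgg : (n : ℝ) * n ≤ 8 * Γ * Γ * (g * g - 1) := by
          have h1 : (n : ℝ) ≤ 2 * Γ * g := by
            rw [div_le_iff₀ (by positivity)] at hg1'
            linarith
          have h2 : (n : ℝ) * n ≤ (2 * Γ * g) * (2 * Γ * g) := mul_self_le_mul_self hn0.le h1
          have h3 : (4:ℝ) ≤ g * g := by
            have := mul_self_le_mul_self (by norm_num : (0:ℝ) ≤ 2) hg2
            linarith
          have h4 : (0:ℝ) ≤ Γ * Γ := by positivity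
          have := mul_le_mul_of_nonneg_left h3 h4
          linarith
        have hCr : (C : ℝ) = 32 * Γ * Γ := by rw [hC]; push_cast; ring
        rw [hCr]
        calc 4 * (n:ℝ) * (2 * numEdges n) ≤ 4 * n * (n * n) := by
              apply mul_le_mul_of_nonneg_left _ (by positivity); linarith
          _ ≤ 4 * n * (8 * Γ * Γ * (g * g - 1)) := mul_le_mul_of_nonneg_left hgg (by positivity)
          _ = _ := by ring
      calc (4:ℝ) ^ n * (2 * Real.exp (-((g * g - 1) / (2 * numEdges n) * L)))
          ≤ Real.exp (2 * n) * (2 * Real.exp (-(4 * n))) := by gcongr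
        _ = 2 * Real.exp (-(2 * n)) := by
            rw [mul_left_comm, ← Real.exp_add]; ring_nf
        _ ≤ n * (2 * Real.exp (-(2 * n))) := by
            have := Real.exp_pos (-(2 * (n:ℝ)))
            have := mul_le_mul_of_nonneg_right (by linarith : (1:ℝ) ≤ n) this.le
            linarith
    have q2 : (n:ℝ) * ((2⁻¹) ^ m * Real.exp (2 * n / numEdges n * L)) ≤ ε / 3 := by
      refine le_trans ?_ e2
      apply mul_le_mul_of_nonneg_left _ hn0.le
      have h1 : 2 * n / numEdges n * L ≤ (8:ℝ) * C := by
        rw [div_mul_eq_mul_div, div_le_iff₀ hN0, hLr]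
        have := mul_le_mul_of_nonneg_left hNge (Nat.cast_nonneg C : (0:ℝ) ≤ C)
        linarith
      have h2 : ((2:ℝ)⁻¹) ^ m ≤ 2 * Real.exp (-(η * Real.log 2 * n)) := by
        have h3 : ((2:ℝ)⁻¹) ^ m = Real.exp (-(m * Real.log 2)) := by
          rw [inv_pow, Real.exp_neg, Real.exp_nat_mul, Real.exp_log (by norm_num)]
        have h4 : (2:ℝ) = Real.exp (Real.log 2) := (Real.exp_log (by norm_num)).symm
        rw [h3]
        conv_rhs => rw [show (2:ℝ) * Real.exp (-(η * Real.log 2 * n)) = Real.exp (Real.log 2) * Real.exp (-(η * Real.log 2 * n)) by rw [← h4]]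
        rw [← Real.exp_add]
        apply Real.exp_le_exp.2
        have := mul_le_mul_of_nonneg_right hmgt.le hlog2.le
        linarith
      calc ((2:ℝ)⁻¹) ^ m * Real.exp (2 * n / numEdges n * L)
          ≤ (2 * Real.exp (-(η * Real.log 2 * n))) * Real.exp (8 * C) := by gcongr
        _ = _ := by ring
    have q3 : (n:ℝ) * ((η⁻¹) ^ d * Real.exp (-((1 - η) * ((n : ℝ) - m - m - d) / (numEdges n) * ((t : ℝ) - L)))) ≤ ε / 3 := by
      refine le_trans ?_ e3
      have hmain : (1 + ε / 4) * Real.log n ≤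
          (1 - η) * ((n : ℝ) - m - m - d) / (numEdges n) * ((t : ℝ) - L) := by
        have hA : (1 - 3 * η) * n ≤ (n : ℝ) - m - m - d := by
          have : 16 * ((d:ℝ) + 1) ≤ n * ε := by rwa [div_le_iff₀ hε] at ndε
          rw [hη] at hmle ⊢
          linarith
        have hB : (1 + 15 * η) * n * Real.log n / 2 ≤ (t : ℝ) - L := by
          rw [hLr]
          have h1 : (n:ℝ) * (32 * C) ≤ n * (ε * Real.log n) := mul_le_mul_of_nonneg_left hCε hn0.le
          rw [hη]
          linarith
        have hk : 1 + ε / 4 ≤ (1 - η) * (1 - 3 * η) * (1 + 15 * η) := by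
          have : ε = 16 * η := by rw [hη]; ring
          rw [this]
          have a1 := mul_le_mul_of_nonneg_right hη16 hη0.le
          have a2 := mul_pos (mul_pos hη0 hη0) hη0
          linarith
        have h1 : (1 - η) * ((1 - 3 * η) * n) / (n * n / 2) ≤ (1 - η) * ((n : ℝ) - m - m - d) / (numEdges n) := by
          apply div_le_div₀ _ _ hN0 hNle
          · apply mul_nonneg (by linarith)
            have := mul_le_mul_of_nonneg_right hη16 hn0.le
            linarith
          · exact mul_le_mul_of_nonneg_left hA (by linarith)
        calc (1 + ε / 4) * Real.log n ≤ ((1 - η) * (1 - 3 * η) * (1 + 15 * η)) * Real.log n :=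
              mul_le_mul_of_nonneg_right hk hlog0.le
          _ = (1 - η) * ((1 - 3 * η) * n) / (n * n / 2) * ((1 + 15 * η) * n * Real.log n / 2) := by
              field_simp
          _ ≤ _ := by
              apply mul_le_mul h1 hB
              · positivity
              · refine le_trans ?_ h1
                apply div_nonneg _ (by positivity)
                apply mul_nonneg (by linarith)
                have := mul_le_mul_of_nonneg_right hη16 hn0.le
                linarith
      calc (n:ℝ) * ((η⁻¹) ^ d * Real.exp (-((1 - η) * ((n : ℝ) - m - m - d) / (numEdges n) * ((t : ℝ) - L))))
          ≤ Real.exp (Real.log n) * ((η⁻¹) ^ d * Real.exp (-((1 + ε / 4) * Real.log n))) := by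
            rw [Real.exp_log hn0]
            gcongr
        _ = _ := by
            rw [mul_left_comm, ← Real.exp_add]; ring_nf
    linarith

end fixed

/-- The quality of a strategy with parameter `e`. -/
def GoodStrat (d n : ℕ) (e : ℝ) (strat : Strategy n) : Prop :=
  (∀ σ : EdgeOrdering n, numAccepted strat σ ⌈(1 + e) * n * Real.log n / 2⌉₊
      ≤ ⌈(1 + e) * d * n / 2⌉₊) ∧
  ((Finset.univ.filter (fun σ : EdgeOrdering n => ¬ IsKConnected d
      (builderGraph strat σ ⌈(1 + e) * n * Real.log n / 2⌉₊))).card : ℝ)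
    ≤ (Fintype.card (EdgeOrdering n) : ℝ) * e

lemma numAccepted_reject {n : ℕ} (σ : EdgeOrdering n) (t : ℕ) :
    numAccepted (fun _ => false) σ t = 0 := by
  unfold numAccepted builderGraph
  simp

lemma GoodStrat.pr_ge {d n : ℕ} {e : ℝ} {strat : Strategy n} (h : GoodStrat d n e strat) :
    1 - e ≤ Pr (fun σ : EdgeOrdering n =>
      IsKConnected d (builderGraph strat σ ⌈(1 + e) * n * Real.log n / 2⌉₊)) := by
  have hne : Nonempty (EdgeOrdering n) := ⟨Fintype.equivFin _⟩
  have hpos : (0 : ℝ) < (Fintype.card (EdgeOrdering n) : ℝ) := by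
    exact_mod_cast Fintype.card_pos
  have h1 := Finset.card_filter_add_card_filter_not
    (s := (Finset.univ : Finset (EdgeOrdering n))) (fun σ : EdgeOrdering n =>
      IsKConnected d (builderGraph strat σ ⌈(1 + e) * n * Real.log n / 2⌉₊))
  rw [Finset.card_univ] at h1
  have h2 : ((Finset.univ.filter (fun σ : EdgeOrdering n => IsKConnected d
      (builderGraph strat σ ⌈(1 + e) * n * Real.log n / 2⌉₊))).card : ℝ) +
      ((Finset.univ.filter (fun σ : EdgeOrdering n => ¬ IsKConnected d
      (builderGraph strat σ ⌈(1 + e) * n * Real.log n / 2⌉₊))).card : ℝ)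
      = (Fintype.card (EdgeOrdering n) : ℝ) := by exact_mod_cast h1
  have h3 := h.2
  unfold Pr
  rw [le_div_iff₀ hpos]
  linarith

lemma Pr_le_one {α : Type*} [Fintype α] (P : α → Prop) : Pr P ≤ 1 := by
  unfold Pr
  apply div_le_one_of_le₀
  · exact_mod_cast Finset.card_le_univ _
  · positivity

/-- Fix an integer `d ≥ 2`. There exists a sequence `(ε_n)` of nonnegative
reals tending to `0` such that, with `t = ⌈(1+ε_n)·n·log n/2⌉` and `b = ⌈(1+ε_n)·d·n/2⌉`,
Builder has a `(t,b)`-strategy for which `G_t` is a.a.s. `d`-connected. -/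
theorem statement0 (d : ℕ) (hd : 2 ≤ d) :
    ∃ ε : ℕ → ℝ, (∀ n, 0 ≤ ε n) ∧ Tendsto ε atTop (nhds 0) ∧
      ∃ strat : (n : ℕ) → Strategy n,
        (∀ n (σ : EdgeOrdering n),
            numAccepted (strat n) σ ⌈(1 + ε n) * n * Real.log n / 2⌉₊
              ≤ ⌈(1 + ε n) * d * n / 2⌉₊) ∧
        Tendsto (fun n =>
            Pr (fun σ : EdgeOrdering n =>
              IsKConnected d (builderGraph (strat n) σ ⌈(1 + ε n) * n * Real.log n / 2⌉₊)))
          atTop (nhds 1) := by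
  set P : ℕ → ℕ → Prop := fun n k => ∃ strat, GoodStrat d n (1 / ((k : ℝ) + 1)) strat with hP
  have hev : ∀ k, ∀ᶠ n in atTop, P n k := by
    intro k
    have h0 : (0 : ℝ) < (k : ℝ) + 1 := by positivity
    have hk : (0 : ℝ) ≤ (k : ℝ) := by positivity
    exact fixed_eps d hd (1 / ((k : ℝ) + 1)) (by positivity)
      (by rw [div_le_one h0]; linarith)
  set κ : ℕ → ℕ := fun n => Nat.findGreatest (P n) n with hκ
  have hκt : Tendsto κ atTop atTop := by
    rw [tendsto_atTop]
    intro K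
    filter_upwards [hev K, eventually_ge_atTop K] with n h1 h2
    exact Nat.le_findGreatest h2 h1
  have hgood : ∀ᶠ n in atTop, P n (κ n) := by
    filter_upwards [hev 0] with n h1
    exact Nat.findGreatest_spec (Nat.zero_le n) h1
  have hεt : Tendsto (fun n => 1 / ((κ n : ℝ) + 1)) atTop (nhds 0) :=
    (tendsto_one_div_add_atTop_nhds_zero_nat (𝕜 := ℝ)).comp hκt
  refine ⟨fun n => 1 / ((κ n : ℝ) + 1), fun n => by positivity, hεt,
    fun n => if h : P n (κ n) then h.choose else fun _ => false, ?_, ?_⟩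
  · intro n σ
    by_cases h : P n (κ n)
    · simp only [dif_pos h]
      exact h.choose_spec.1 σ
    · simp only [dif_neg h, numAccepted_reject]
      exact Nat.zero_le _
  · have hl : Tendsto (fun n => 1 - 1 / ((κ n : ℝ) + 1)) atTop (nhds 1) := by
      simpa using hεt.const_sub 1
    refine tendsto_of_tendsto_of_tendsto_of_le_of_le' hl tendsto_const_nhds ?_ ?_
    · filter_upwards [hgood] with n h
      simp only [dif_pos h]
      exact h.choose_spec.pr_ge
    · exact Eventually.of_forall fun n => Pr_le_one _

end
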